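/- Under the standing assumptions, suppose O is transfer Krull and Cl(R) ≅ Pic(O). Let P ∈ Spec(R) divide the conductor f, let n = ord([P]) and p = P ∩ O. Then the set of valuations v_p(u) over all atoms u of O_p satisfies: v_p(A(O_p)) ⊆ {1,2} if n = 2, and v_p(A(O_p)) = {1} if n ≠ 2. In particular O·R^× = R. -/

import Mathlib

open scoped nonZeroDivisors

section MonoidDefs
variable {H B : Type*} [CommMonoid H] [CommMonoid B]

/-- The set of lengths of `a`: `{0}` for units, otherwise the set of `k` such that
`a` is a product of `k` atoms (irreducible elements). -/
def lengthsSet (a : H) : Set ℕ :=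
  {k | (IsUnit a ∧ k = 0) ∨
    (¬ IsUnit a ∧ ∃ l : Multiset H, Multiset.card l = k ∧ (∀ x ∈ l, Irreducible x) ∧ l.prod = a)}

/-- A transfer homomorphism: (T1) `B = θ(H)·B^×` and `θ⁻¹(B^×) = H^×`;
(T2) factorizations of `θ u` lift to factorizations of `u` up to associates. -/
def IsTransferHom (θ : H →* B) : Prop :=
  (∀ b : B, ∃ u : H, ∃ ε : Bˣ, b = θ u * ε) ∧
  (∀ u : H, IsUnit (θ u) → IsUnit u) ∧
  (∀ u : H, ∀ b c : B, θ u = b * c →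
    ∃ v w : H, u = v * w ∧ Associated (θ v) b ∧ Associated (θ w) c)

/-- A Krull monoid: a monoid admitting a divisor homomorphism into a
free abelian monoid. -/
def IsKrullMonoid (H : Type*) [CommMonoid H] : Prop :=
  ∃ (ι : Type) (d : H →* Multiplicative (ι →₀ ℕ)), ∀ a b : H, d a ∣ d b → a ∣ b

/-- Half-factorial: all factorizations of an element into atoms have the same length. -/
def IsHalfFactorial (A : Type*) [CommMonoid A] : Prop :=
  ∀ (a : A) (l m : Multiset A), (∀ x ∈ l, Irreducible x) → (∀ x ∈ m, Irreducible x) →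
    l.prod = a → m.prod = a → Multiset.card l = Multiset.card m

/-- An absolutely irreducible element: an atom all of whose powers factor uniquely
into atoms, up to associates. -/
def AbsolutelyIrreducible (a : H) : Prop :=
  Irreducible a ∧ ∀ n : ℕ, 0 < n → ∀ l m : Multiset H,
    (∀ x ∈ l, Irreducible x) → (∀ x ∈ m, Irreducible x) →
    l.prod = a ^ n → m.prod = a ^ n → Multiset.Rel Associated l m

end MonoidDefs

section RingDefs
variable {R : Type*} [CommRing R]

/-- The conductor of a subring `O ⊆ R`: the largest ideal of `R` contained in `O`. -/
def Subring.conductor (O : Subring R) : Ideal R where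
  carrier := {x | ∀ r : R, x * r ∈ O}
  add_mem' := by
    intro a b ha hb r
    have h : (a + b) * r = a * r + b * r := by ring
    rw [h]; exact O.add_mem (ha r) (hb r)
  zero_mem' := by intro r; simpa using O.zero_mem
  smul_mem' := by
    intro c x hx r
    have h : c • x * r = x * (c * r) := by simp [smul_eq_mul]; ring
    rw [h]; exact hx (c * r)

/-- `a` is a regular element modulo the ideal `f`. -/
def RegF (f : Ideal R) (a : R) : Prop := IsUnit (Ideal.Quotient.mk f a)

end RingDefs

section TK
variable {K : Type*} [CommRing K]

/-- `x` and `y` are associated within the submonoid `H` of `K`. -/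
def AssocIn (H : Submonoid K) (x y : K) : Prop :=
  ∃ ε ∈ H, (∃ ε' ∈ H, ε * ε' = 1) ∧ x = y * ε

end TK

variable {R₀ : Type*}

/-- `H` is a Krull overmonoid of `O^∙` inside the quotient field of `O` (which is the
quotient field of `R`), with `O^∙ ⊆ H ⊆ q(O^∙)`, such that the inclusion `O^∙ ↪ H`
is a transfer homomorphism; this witnesses that `O` is transfer Krull. -/
structure IsTKOvermonoid {R : Type*} [CommRing R] [IsDomain R] [IsDedekindDomain R]
    (O : Subring R) (H : Submonoid (FractionRing R)) : Prop where
  nonzero : ∀ x ∈ H, x ≠ 0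
  incl : ∀ a : R, a ∈ O → a ≠ 0 → algebraMap R (FractionRing R) a ∈ H
  inQuot : ∀ x ∈ H, ∃ a b : R, a ∈ O ∧ b ∈ O ∧ a ≠ 0 ∧ b ≠ 0 ∧
    x * algebraMap R (FractionRing R) b = algebraMap R (FractionRing R) a
  krull : IsKrullMonoid ↥H
  t1 : ∀ x ∈ H, ∃ a : R, a ∈ O ∧ a ≠ 0 ∧ ∃ ε ∈ H, (∃ ε' ∈ H, ε * ε' = 1) ∧
    x = algebraMap R (FractionRing R) a * ε
  t1' : ∀ a : R, a ∈ O → a ≠ 0 →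
    (∃ y ∈ H, algebraMap R (FractionRing R) a * y = 1) → ∃ b ∈ O, a * b = 1
  t2 : ∀ a : R, a ∈ O → a ≠ 0 → ∀ x ∈ H, ∀ y ∈ H,
    algebraMap R (FractionRing R) a = x * y →
    ∃ v w : R, v ∈ O ∧ w ∈ O ∧ a = v * w ∧
      AssocIn H (algebraMap R (FractionRing R) v) x ∧
      AssocIn H (algebraMap R (FractionRing R) w) y

open Classical in
/-- The `P`-adic valuation of `a`: the multiplicity of the prime ideal `P` in the
factorization of the ideal `aR`. -/
noncomputable def idealVal {R : Type*} [CommRing R] [IsDomain R] [IsDedekindDomain R]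
    (P : Ideal R) (a : R) : ℕ :=
  Multiset.count P (UniqueFactorizationMonoid.normalizedFactors (Ideal.span {a}))

/-- `a ∈ O` maps to an atom of the localization of `O` at the prime `P ∩ O`. -/
def IsLocalAtom {R : Type*} [CommRing R] (O : Subring R) (P : Ideal R)
    (hq : (Ideal.comap (Subring.subtype O) P).IsPrime) (a : ↥O) : Prop :=
  Irreducible (algebraMap ↥O
    (@Localization.AtPrime ↥O _ (Ideal.comap (Subring.subtype O) P) hq) a)

open scoped nonZeroDivisors

section PartA
open UniqueFactorizationMonoid
variable {R : Type*} [CommRing R] [IsDedekindDomain R]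

/-- prime ideal factors of `a`. -/
noncomputable def fac (a : R) : Multiset (Ideal R) := normalizedFactors (Ideal.span {a})

lemma span_ne_bot {a : R} (ha : a ≠ 0) : Ideal.span {a} ≠ (0 : Ideal R) := by
  simpa [Ideal.zero_eq_bot, Ideal.span_singleton_eq_bot] using ha

lemma fac_mul {a b : R} (ha : a ≠ 0) (hb : b ≠ 0) : fac (a * b) = fac a + fac b := by
  unfold fac
  rw [← Ideal.span_singleton_mul_span_singleton,
    normalizedFactors_mul (span_ne_bot ha) (span_ne_bot hb)]

lemma fac_prod {a : R} (ha : a ≠ 0) : (fac a).prod = Ideal.span {a} := by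
  have := prod_normalizedFactors (span_ne_bot ha)
  exact associated_iff_eq.mp this

lemma fac_prime {a : R} {Q : Ideal R} (h : Q ∈ fac a) : Prime Q := prime_of_normalized_factor _ h

lemma fac_one : fac (1 : R) = 0 := by
  unfold fac
  rw [Ideal.span_singleton_one, ← Ideal.one_eq_top, normalizedFactors_one]

lemma fac_unit {a : R} (h : IsUnit a) : fac a = 0 := by
  unfold fac
  rw [Ideal.span_singleton_eq_top.mpr h, ← Ideal.one_eq_top, normalizedFactors_one]

lemma fac_eq_zero {a : R} (ha : a ≠ 0) : fac a = 0 ↔ IsUnit a := by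
  constructor
  · intro h
    have := fac_prod ha
    rw [h, Multiset.prod_zero, Ideal.one_eq_top] at this
    exact Ideal.span_singleton_eq_top.mp this.symm
  · exact fac_unit

lemma fac_pow (a : R) (n : ℕ) : fac (a ^ n) = n • fac a := by
  unfold fac
  rw [← Ideal.span_singleton_pow, normalizedFactors_pow]

lemma fac_of_span {a : R} (m : Multiset (Ideal R)) (hm : ∀ Q ∈ m, Prime Q)
    (h : Ideal.span {a} = m.prod) : fac a = m := by
  unfold fac
  rw [h, normalizedFactors_prod_of_prime hm]

lemma fac_assoc {a b : R} (h : Associated a b) : fac a = fac b := by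
  unfold fac
  rw [Ideal.span_singleton_eq_span_singleton.mpr h]

lemma assoc_of_fac {a b : R} (ha : a ≠ 0) (hb : b ≠ 0) (h : fac a = fac b) : Associated a b := by
  rw [← Ideal.span_singleton_eq_span_singleton, ← fac_prod ha, ← fac_prod hb, h]

lemma mem_fac {a : R} (ha : a ≠ 0) {Q : Ideal R} : Q ∈ fac a ↔ Prime Q ∧ a ∈ Q := by
  unfold fac
  rw [mem_normalizedFactors_iff (span_ne_bot ha), Ideal.dvd_span_singleton]

lemma fac_list_prod (l : List R) (h : ∀ x ∈ l, x ≠ 0) : fac l.prod = (l.map fac).sum := by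
  induction l with
  | nil => simpa using fac_one
  | cons x l ih =>
    have h1 : l.prod ≠ 0 := List.prod_ne_zero (fun h0 => h 0 (List.mem_cons_of_mem _ h0) rfl)
    rw [List.prod_cons, fac_mul (h x (by simp)) h1, ih (fun y hy => h y (by simp [hy]))]
    simp

open Classical in
lemma idealVal_eq (P : Ideal R) (a : R) : idealVal P a = Multiset.count P (fac a) := by
  unfold idealVal fac; rfl

/-- total class function. -/
noncomputable def clG (A : Ideal R) : ClassGroup R :=
  open Classical in if h : A ∈ (Ideal R)⁰ then ClassGroup.mk0 ⟨A, h⟩ else 1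

lemma clG_eq {A : Ideal R} (h : A ∈ (Ideal R)⁰) : clG A = ClassGroup.mk0 ⟨A, h⟩ := by
  simp [clG, h]

lemma clG_mul {A B : Ideal R} (hA : A ≠ 0) (hB : B ≠ 0) : clG (A * B) = clG A * clG B := by
  rw [clG_eq (mem_nonZeroDivisors_of_ne_zero hA), clG_eq (mem_nonZeroDivisors_of_ne_zero hB),
    clG_eq (mem_nonZeroDivisors_of_ne_zero (mul_ne_zero hA hB)), ← map_mul]
  rfl

lemma clG_one : clG (1 : Ideal R) = 1 := by
  rw [clG_eq (one_mem _)]; exact map_one _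

lemma clG_pow {A : Ideal R} (hA : A ≠ 0) (n : ℕ) : clG (A ^ n) = clG A ^ n := by
  induction n with
  | zero => rw [pow_zero, pow_zero, clG_one]
  | succ n ih => rw [pow_succ, pow_succ, clG_mul (pow_ne_zero _ hA) hA, ih]

lemma clG_eq_one_iff {A : Ideal R} (hA : A ≠ 0) : clG A = 1 ↔ ∃ x, Ideal.span {x} = A := by
  rw [clG_eq (mem_nonZeroDivisors_of_ne_zero hA), ClassGroup.mk0_eq_one_iff]
  constructor
  · rintro ⟨x, hx⟩
    exact ⟨x, hx.symm⟩
  · rintro ⟨x, hx⟩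
    exact ⟨x, hx.symm⟩

lemma clG_span {x : R} (hx : x ≠ 0) : clG (Ideal.span {x}) = 1 :=
  (clG_eq_one_iff (span_ne_bot hx)).mpr ⟨x, rfl⟩

lemma clG_msprod (m : Multiset (Ideal R)) (hm : ∀ Q ∈ m, Q ≠ 0) :
    clG m.prod = (m.map clG).prod := by
  induction m using Multiset.induction_on with
  | empty => simpa using clG_one
  | cons Q m ih =>
    have : m.prod ≠ 0 := Multiset.prod_ne_zero (fun h0 => hm 0 (Multiset.mem_cons_of_mem h0) rfl)
    rw [Multiset.prod_cons, clG_mul (hm Q (by simp)) this, ih (fun y hy => hm y (by simp [hy]))]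
    simp

lemma clG_fac {a : R} (ha : a ≠ 0) : ((fac a).map clG).prod = 1 := by
  rw [← clG_msprod _ (fun Q hQ => (fac_prime hQ).ne_zero), fac_prod ha, clG_span ha]

end PartA

section PartB
variable {R : Type*} [CommRing R]

/-- uniform power making all elements idempotent mod `f`. -/
lemma exists_unif_pow (f : Ideal R) (hfin : Finite (R ⧸ f)) :
    ∃ t : ℕ, 0 < t ∧ ∀ r : R, r ^ t * r ^ t - r ^ t ∈ f := by
  have hninj : ¬ Function.Injective (fun n : ℕ => (fun r : R ⧸ f => r ^ n)) :=
    not_injective_infinite_finite _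
  have : ∃ i d : ℕ, 0 < d ∧ ∀ r : R ⧸ f, r ^ i = r ^ (i + d) := by
    simp only [Function.Injective, not_forall] at hninj
    obtain ⟨i, j, hij, hne⟩ := hninj
    rcases lt_or_gt_of_ne hne with h | h
    · refine ⟨i, j - i, by omega, fun r => ?_⟩
      rw [show i + (j - i) = j by omega]
      exact congrFun hij r
    · refine ⟨j, i - j, by omega, fun r => ?_⟩
      rw [show j + (i - j) = i by omega]
      exact (congrFun hij r).symm
  obtain ⟨i, d, hd, h⟩ := this
  have h2 : ∀ (k l : ℕ) (r : R ⧸ f), r ^ (i + k) = r ^ (i + k + l * d) := by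
    intro k l r
    induction l with
    | zero => simp
    | succ l ih =>
      rw [ih, show i + k + (l + 1) * d = (i + d) + (k + l * d) by ring, pow_add r (i + d), ← h,
        ← pow_add]
      congr 1; ring
  refine ⟨d * (i + 1), by positivity, fun r => ?_⟩
  rw [← Ideal.Quotient.eq, map_mul, map_pow, ← pow_add]
  have hle : i ≤ d * (i + 1) := by nlinarith
  obtain ⟨k, hk⟩ := Nat.exists_eq_add_of_le hle
  have := h2 k (i + 1) (Ideal.Quotient.mk f r)
  rw [← hk] at this
  rw [this]; congr 1; ring

lemma mem_of_conductor {O : Subring R} {x : R} (h : x ∈ O.conductor) : x ∈ O := by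
  have := h 1
  simpa using this

/-- idempotents mod the conductor lie in `O` under the contraction-compatibility condition. -/
lemma idem_mem (O : Subring R) (hfg : Module.Finite ↥O R) (e : R)
    (he : e * e - e ∈ O.conductor)
    (hc : ∀ P P' : Ideal R, P.IsPrime → P'.IsPrime → O.conductor ≤ P → O.conductor ≤ P' →
      Ideal.comap O.subtype P = Ideal.comap O.subtype P' → e ∈ P → 1 - e ∈ P' → False) :
    e ∈ O := by
  set f := O.conductor with hf
  set I1 := Ideal.comap O.subtype (Ideal.span {e} ⊔ f)
  set I2 := Ideal.comap O.subtype (Ideal.span {1 - e} ⊔ f)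
  have htop : I1 ⊔ I2 = ⊤ := by
    by_contra hne
    obtain ⟨m, hm, hle⟩ := Ideal.exists_le_maximal _ hne
    have hmp := hm.isPrime
    have : Algebra.IsIntegral O R := inferInstance
    obtain ⟨Q1, h1, h1p, h1c⟩ := Ideal.exists_ideal_over_prime_of_isIntegral m
      (Ideal.span {e} ⊔ f) (le_sup_left.trans hle)
    obtain ⟨Q2, h2, h2p, h2c⟩ := Ideal.exists_ideal_over_prime_of_isIntegral m
      (Ideal.span {1 - e} ⊔ f) (le_sup_right.trans hle)
    refine hc Q1 Q2 h1p h2p (le_sup_right.trans h1) (le_sup_right.trans h2) ?_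
      (h1 (Ideal.mem_sup_left (Ideal.mem_span_singleton_self _)))
      (h2 (Ideal.mem_sup_left (Ideal.mem_span_singleton_self _)))
    exact h1c.trans h2c.symm
  have h1 : (1 : O) ∈ I1 ⊔ I2 := htop ▸ Submodule.mem_top
  obtain ⟨u, hu, u', hu', huu⟩ := Submodule.mem_sup.mp h1
  have hu1 : (u : R) ∈ Ideal.span {e} ⊔ f := hu
  have hu2 : (u' : R) ∈ Ideal.span {1 - e} ⊔ f := hu'
  obtain ⟨x, hx, c, hcc, hxc⟩ := Submodule.mem_sup.mp hu1
  obtain ⟨y, hy, c', hcc', hyc⟩ := Submodule.mem_sup.mp hu2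
  obtain ⟨x, rfl⟩ := Ideal.mem_span_singleton'.mp hx
  obtain ⟨y, rfl⟩ := Ideal.mem_span_singleton'.mp hy
  have huu' : (u : R) + u' = 1 := by exact_mod_cast congrArg (Subtype.val) huu
  have key : e - u ∈ f := by
    have e1 : e - u = (e * e - e) * (x - y) + (e * c' - (1 - e) * c) := by
      have a1 : (u : R) = x * e + c := hxc.symm
      have a2 : (u' : R) = y * (1 - e) + c' := hyc.symm
      have a3 : e * (u + u') = e := by rw [huu', mul_one]
      have : e - u = e * u' - (1 - e) * u := by linear_combination (-1 : R) * a3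
      rw [this, a1, a2]; ring
    rw [e1]
    exact f.add_mem (f.mul_mem_right _ he)
      (f.sub_mem (f.mul_mem_left _ hcc') (f.mul_mem_left _ hcc))
  have := O.add_mem (mem_of_conductor key) u.2
  simpa using this

end PartB

open scoped nonZeroDivisors

section PartC
variable {R : Type*} [CommRing R] [IsDedekindDomain R]

lemma conductor_ne_zero (O : Subring R) (hfg : Module.Finite ↥O R)
    (hfrac : ∀ r : R, ∃ a b : ↥O, (b : R) ≠ 0 ∧ (b : R) * r = (a : R)) :
    ∃ c ∈ O.conductor, c ≠ 0 := by
  obtain ⟨s, hs⟩ := hfg.fg_top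
  have key : ∀ s : Finset R, ∃ c ∈ O, c ≠ 0 ∧ ∀ r ∈ s, c * r ∈ O := by
    intro s
    classical
    induction s using Finset.induction_on with
    | empty => exact ⟨1, O.one_mem, one_ne_zero, by simp⟩
    | insert x s hx ih =>
      obtain ⟨c, hc, hc0, h⟩ := ih
      obtain ⟨a, b, hb, hab⟩ := hfrac x
      refine ⟨c * b, O.mul_mem hc b.2, mul_ne_zero hc0 hb, ?_⟩
      intro r hr
      rcases Finset.mem_insert.mp hr with rfl | hr
      · rw [mul_assoc, hab]; exact O.mul_mem hc a.2
      · rw [mul_right_comm]; exact O.mul_mem (h r hr) b.2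
  obtain ⟨c, hc, hc0, h⟩ := key s
  refine ⟨c, ?_, hc0⟩
  intro r
  have hr : r ∈ Submodule.span (↥O) (s : Set R) := hs ▸ Submodule.mem_top
  induction hr using Submodule.span_induction with
  | mem x hx => exact h x hx
  | zero => simp
  | add x y _ _ hx hy => rw [mul_add]; exact O.add_mem hx hy
  | smul a x _ hx =>
    have : c * (a • x) = a * (c * x) := by rw [Subring.smul_def, smul_eq_mul]; ring
    rw [this]; exact O.mul_mem a.2 hx

/-- Abstract relation capturing association in `H`. -/
structure TR (O : Subring R) (r : R → R → Prop) : Prop where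
  symm : ∀ {a b}, r a b → r b a
  trans : ∀ {a b c}, r a b → r b c → r a c
  mul : ∀ {a b c d}, r a b → r c d → r (a * c) (b * d)
  cancel : ∀ {a b c}, c ≠ 0 → r (a * c) (b * c) → r a b
  assoc : ∀ {a b}, Associated a b → r a b
  t2 : ∀ {a x y}, a ∈ O → a ≠ 0 → x ≠ 0 → y ≠ 0 → r a (x * y) →
    ∃ v w, v ∈ O ∧ w ∈ O ∧ a = v * w ∧ r v x ∧ r w y
  unit : ∀ {a}, a ∈ O → a ≠ 0 → r a 1 → IsUnit a

lemma R_sub_H (O : Subring R) (hfg : Module.Finite ↥O R)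
    (hfrac : ∀ r : R, ∃ a b : ↥O, (b : R) ≠ 0 ∧ (b : R) * r = (a : R))
    (H : Submonoid (FractionRing R)) (hH : IsTKOvermonoid O H) (r : R) (hr : r ≠ 0) :
    algebraMap R (FractionRing R) r ∈ H := by
  obtain ⟨c, hc, hc0⟩ := conductor_ne_zero O hfg hfrac
  obtain ⟨a, b, hb, hab⟩ := hfrac r
  obtain ⟨ι, d, hd⟩ := hH.krull
  have ha0 : (a : R) ≠ 0 := hab ▸ mul_ne_zero hb hr
  let aH : H := ⟨_, hH.incl a a.2 ha0⟩
  let bH : H := ⟨_, hH.incl b b.2 hb⟩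
  let cH : H := ⟨_, hH.incl c (mem_of_conductor hc) hc0⟩
  let xH : ℕ → H := fun n => ⟨_, hH.incl (c * r ^ n) (hc _) (mul_ne_zero hc0 (pow_ne_zero _ hr))⟩
  have hrel : ∀ n, xH n * bH ^ n = cH * aH ^ n := by
    intro n
    apply Subtype.ext
    simp only [xH, bH, cH, aH, Submonoid.coe_mul, SubmonoidClass.coe_pow, ← map_pow, ← map_mul]
    rw [← hab, mul_pow]; congr 1; ring
  have hle : ∀ i, (Multiplicative.toAdd (d bH)) i ≤ (Multiplicative.toAdd (d aH)) i := by
    intro i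
    have h1 : ∀ n : ℕ, n * (Multiplicative.toAdd (d bH)) i ≤
        (Multiplicative.toAdd (d cH)) i + n * (Multiplicative.toAdd (d aH)) i := by
      intro n
      have := congrArg (fun z => (Multiplicative.toAdd (d z)) i) (hrel n)
      simp only [map_mul, map_pow, toAdd_mul, toAdd_pow, Finsupp.add_apply, Finsupp.smul_apply,
        smul_eq_mul] at this
      omega
    by_contra hlt
    push Not at hlt
    have := h1 ((Multiplicative.toAdd (d cH)) i + 1)
    nlinarith
  have hdvd : d bH ∣ d aH := by
    refine ⟨Multiplicative.ofAdd (Multiplicative.toAdd (d aH) - Multiplicative.toAdd (d bH)), ?_⟩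
    apply Multiplicative.toAdd.injective
    ext i
    have := hle i
    simp only [toAdd_mul, toAdd_ofAdd, Finsupp.add_apply, Finsupp.tsub_apply]
    omega
  obtain ⟨h, hh⟩ := hd _ _ hdvd
  have h2 : algebraMap R (FractionRing R) a = algebraMap R (FractionRing R) b * h :=
    congrArg Subtype.val hh
  rw [← hab, map_mul] at h2
  have hb' : algebraMap R (FractionRing R) b ≠ 0 := by
    simpa using hb
  rw [mul_left_cancel₀ hb' h2]
  exact h.2

lemma TR_of_H (O : Subring R) (hfg : Module.Finite ↥O R)
    (hfrac : ∀ r : R, ∃ a b : ↥O, (b : R) ≠ 0 ∧ (b : R) * r = (a : R))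
    (H : Submonoid (FractionRing R)) (hH : IsTKOvermonoid O H) :
    TR O (fun x y => AssocIn H (algebraMap R (FractionRing R) x)
      (algebraMap R (FractionRing R) y)) where
  symm := by
    rintro a b ⟨e, he, ⟨e', he', hee⟩, h⟩
    refine ⟨e', he', ⟨e, he, by rw [mul_comm, hee]⟩, ?_⟩
    rw [h, mul_assoc, hee, mul_one]
  trans := by
    rintro a b c ⟨e, he, ⟨e', he', hee⟩, h⟩ ⟨g, hg, ⟨g', hg', hgg⟩, h'⟩
    refine ⟨g * e, H.mul_mem hg he, ⟨g' * e', H.mul_mem hg' he', ?_⟩, ?_⟩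
    · rw [mul_mul_mul_comm, hgg, hee, one_mul]
    · rw [h, h', mul_assoc]
  mul := by
    rintro a b c d ⟨e, he, ⟨e', he', hee⟩, h⟩ ⟨g, hg, ⟨g', hg', hgg⟩, h'⟩
    refine ⟨e * g, H.mul_mem he hg, ⟨e' * g', H.mul_mem he' hg', ?_⟩, ?_⟩
    · rw [mul_mul_mul_comm, hgg, hee, one_mul]
    · rw [map_mul, map_mul, h, h', mul_mul_mul_comm]
  cancel := by
    rintro a b c hc ⟨e, he, hee, h⟩
    refine ⟨e, he, hee, ?_⟩
    have hc' : algebraMap R (FractionRing R) c ≠ 0 := by simpa using hc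
    apply mul_right_cancel₀ hc'
    rw [map_mul, map_mul] at h
    rw [h]; ring
  assoc := by
    rintro a b ⟨u, rfl⟩
    refine ⟨_, R_sub_H O hfg hfrac H hH (↑u⁻¹) u⁻¹.ne_zero,
      ⟨_, R_sub_H O hfg hfrac H hH u u.ne_zero, ?_⟩, ?_⟩
    · rw [← map_mul, Units.inv_mul, map_one]
    · rw [← map_mul, mul_assoc, Units.mul_inv, mul_one]
  t2 := by
    rintro a x y ha ha0 hx hy ⟨e, he, ⟨e', he', hee⟩, h⟩
    have hxH := R_sub_H O hfg hfrac H hH x hx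
    have hyH := R_sub_H O hfg hfrac H hH y hy
    obtain ⟨v, w, hv, hw, hvw, h1, ⟨g, hg, ⟨g', hg', hgg⟩, h'⟩⟩ :=
      hH.t2 a ha ha0 _ hxH _ (H.mul_mem hyH he) (by rw [h, map_mul, mul_assoc])
    refine ⟨v, w, hv, hw, hvw, h1, ⟨e * g, H.mul_mem he hg, ⟨e' * g', H.mul_mem he' hg', ?_⟩, ?_⟩⟩
    · rw [mul_mul_mul_comm, hgg, hee, one_mul]
    · rw [h', mul_assoc]
  unit := by
    rintro a ha ha0 ⟨e, he, ⟨e', he', hee⟩, h⟩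
    rw [map_one, one_mul] at h
    obtain ⟨b, hb, hab⟩ := hH.t1' a ha ha0 ⟨e', he', by rw [h, hee]⟩
    exact IsUnit.of_mul_eq_one b hab

namespace TR
variable {O : Subring R} {r : R → R → Prop}

lemma refl (h : TR O r) (a : R) : r a a := h.assoc (Associated.refl a)

/-- iterated T2 for lists. -/
lemma t2_list (h : TR O r) (l : List R) : ∀ a : R, a ∈ O → a ≠ 0 → (∀ x ∈ l, x ≠ 0) → r a l.prod →
    ∃ (m : List R) (u : R), IsUnit u ∧ u ∈ O ∧ a = u * m.prod ∧ (∀ w ∈ m, w ∈ O) ∧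
      List.Forall₂ r m l := by
  induction l with
  | nil =>
    intro a ha ha0 _ hr
    exact ⟨[], a, h.unit ha ha0 (by simpa using hr), ha, by simp, by simp, List.Forall₂.nil⟩
  | cons x l ih =>
    intro a ha ha0 hl hr
    have hl' : ∀ y ∈ l, y ≠ 0 := fun y hy => hl y (by simp [hy])
    have h1 : l.prod ≠ 0 := List.prod_ne_zero (fun h0 => hl' 0 h0 rfl)
    rw [List.prod_cons] at hr
    obtain ⟨v, w, hv, hw, rfl, hvx, hwl⟩ := h.t2 ha ha0 (hl x (by simp)) h1 hr
    have hw0 : w ≠ 0 := right_ne_zero_of_mul ha0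
    obtain ⟨m, u, hu, huO, rfl, hm, hf⟩ := ih w hw hw0 hl' hwl
    refine ⟨v :: m, u, hu, huO, by rw [List.prod_cons]; ring, ?_, List.Forall₂.cons hvx hf⟩
    intro z hz
    rcases List.mem_cons.mp hz with rfl | hz
    · exact hv
    · exact hm z hz

end TR
end PartC

open scoped nonZeroDivisors

section PartD
open UniqueFactorizationMonoid
variable {R : Type*} [CommRing R] [IsDedekindDomain R]

lemma f2_rep {r : R → R → Prop} {x : R} : ∀ (k : ℕ) (m : List R),
    List.Forall₂ r m (List.replicate k x) → m.length = k ∧ ∀ w ∈ m, r w x := by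
  intro k
  induction k with
  | zero => intro m hm; simp at hm; simp [hm]
  | succ k ih =>
    intro m hm
    rw [List.replicate_succ] at hm
    cases hm with
    | cons h1 h2 =>
      obtain ⟨h3, h4⟩ := ih _ h2
      refine ⟨by simp [h3], ?_⟩
      intro w hw
      rcases List.mem_cons.mp hw with rfl | hw
      · exact h1
      · exact h4 w hw

lemma f2_mem {r : R → R → Prop} : ∀ (m l : List R),
    List.Forall₂ r m l → ∀ w ∈ m, ∃ x ∈ l, r w x := by
  intro m l hm
  induction hm with
  | nil => simp
  | cons h1 h2 ih =>
    intro w hw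
    rcases List.mem_cons.mp hw with rfl | hw
    · exact ⟨_, by simp, h1⟩
    · obtain ⟨x, hx, h⟩ := ih w hw
      exact ⟨x, by simp [hx], h⟩

lemma sum_lower (φ : Multiset (Ideal R) →+ ℕ) (k : ℕ) (m : List R)
    (h : ∀ w ∈ m, k ≤ φ (fac w)) : k * m.length ≤ φ (m.map fac).sum := by
  induction m with
  | nil => simp
  | cons x m ih =>
    have h1 := ih (fun w hw => h w (by simp [hw]))
    have h2 := h x (by simp)
    simp only [List.length_cons, List.map_cons, List.sum_cons, map_add]
    nlinarith

/-- If each value is at least `k` and the total is at most `k * length`, every value is `k`. -/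
lemma sum_tight (φ : Multiset (Ideal R) →+ ℕ) (k : ℕ) (m : List R)
    (h : ∀ w ∈ m, k ≤ φ (fac w)) (h2 : φ (m.map fac).sum ≤ k * m.length) :
    ∀ w ∈ m, φ (fac w) = k := by
  induction m with
  | nil => simp
  | cons x m ih =>
    have h1 := sum_lower φ k m (fun w hw => h w (by simp [hw]))
    have h3 := h x (by simp)
    simp only [List.length_cons, List.map_cons, List.sum_cons, map_add] at h2
    intro w hw
    rcases List.mem_cons.mp hw with rfl | hw
    · nlinarith
    · exact ih (fun w hw => h w (by simp [hw])) (by nlinarith) w hw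

lemma le_sum_fac (m : List R) : ∀ w ∈ m, fac w ≤ (m.map fac).sum := by
  induction m with
  | nil => simp
  | cons x m ih =>
    intro w hw
    rcases List.mem_cons.mp hw with rfl | hw
    · simp
    · exact (ih w hw).trans (by simp)

lemma exists_pow_principal (htor : ∀ c : ClassGroup R, ∃ n : ℕ, 0 < n ∧ c ^ n = 1)
    (Q : Ideal R) (hQ : Q ≠ 0) : ∃ n : ℕ, 0 < n ∧ ∃ x : R, Ideal.span {x} = Q ^ n := by
  obtain ⟨n, hn, h⟩ := htor (clG Q)
  rw [← clG_pow hQ] at h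
  exact ⟨n, hn, (clG_eq_one_iff (pow_ne_zero _ hQ)).mp h⟩

lemma ne_zero_of_span {x : R} {I : Ideal R} (hI : I ≠ 0) (h : Ideal.span {x} = I) : x ≠ 0 := by
  rintro rfl
  apply hI
  rw [← h, Ideal.zero_eq_bot, Ideal.span_singleton_eq_bot]

lemma eq_of_prime_le {P Q : Ideal R} (hP : P.IsPrime) (hQ : Q.IsPrime) (hQ0 : Q ≠ 0) (h : Q ≤ P) :
    Q = P :=
  (hQ.isMaximal hQ0).eq_of_le hP.ne_top h

lemma fac_of_span_pow {x : R} {Q : Ideal R} (hQ : Prime Q) {n : ℕ} (h : Ideal.span {x} = Q ^ n) :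
    fac x = Multiset.replicate n Q := by
  apply fac_of_span
  · intro Q' hQ'
    rw [Multiset.eq_of_mem_replicate hQ']; exact hQ
  · rw [h, Multiset.prod_replicate]

lemma TR.pow {O : Subring R} {r : R → R → Prop} (h : TR O r) {a b : R} (hab : r a b) (n : ℕ) :
    r (a ^ n) (b ^ n) := by
  induction n with
  | zero => simpa using h.refl 1
  | succ n ih => rw [pow_succ, pow_succ]; exact h.mul ih hab

open Classical in
lemma spec_inj {O : Subring R} {r : R → R → Prop} (h : TR O r) (hfg : Module.Finite ↥O R)
    (htor : ∀ c : ClassGroup R, ∃ n : ℕ, 0 < n ∧ c ^ n = 1)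
    (hfin : Finite (R ⧸ O.conductor)) (hf0 : O.conductor ≠ 0)
    (P1 P2 : Ideal R) (h1 : P1.IsPrime) (h2 : P2.IsPrime) (hf1 : O.conductor ≤ P1)
    (hf2 : O.conductor ≤ P2) (hc : Ideal.comap O.subtype P1 = Ideal.comap O.subtype P2) :
    P1 = P2 := by
  by_contra hne
  obtain ⟨t, ht, hidem⟩ := exists_unif_pow _ hfin
  have hchoose : ∀ Q : Ideal R, ∃ n : ℕ, ∃ x : R, Q ≠ 0 → 0 < n ∧ Ideal.span {x} = Q ^ n := by
    intro Q
    by_cases hQ : Q = 0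
    · exact ⟨0, 0, fun h => absurd hQ h⟩
    · obtain ⟨n, hn, x, hx⟩ := exists_pow_principal htor Q hQ
      exact ⟨n, x, fun _ => ⟨hn, hx⟩⟩
  choose n π hπ using hchoose
  let S : Finset (Ideal R) := ((normalizedFactors O.conductor).toFinset).filter
    (fun Q => Ideal.comap O.subtype Q = Ideal.comap O.subtype P1)
  have hfne : ∀ Q : Ideal R, O.conductor ≤ Q → Q ≠ 0 := by
    rintro Q hQ rfl
    exact hf0 (le_bot_iff.mp hQ)
  have hS : ∀ Q : Ideal R, Q ∈ S ↔ Q.IsPrime ∧ O.conductor ≤ Q ∧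
      Ideal.comap O.subtype Q = Ideal.comap O.subtype P1 := by
    intro Q
    simp only [S, Finset.mem_filter, Multiset.mem_toFinset]
    rw [mem_normalizedFactors_iff hf0, Ideal.dvd_iff_le, ← and_assoc]
    constructor
    · rintro ⟨⟨hp, hl⟩, hcc⟩
      exact ⟨⟨Ideal.isPrime_of_prime hp, hl⟩, hcc⟩
    · rintro ⟨⟨hp, hl⟩, hcc⟩
      exact ⟨⟨(Ideal.prime_iff_isPrime (hfne Q hl)).mpr hp, hl⟩, hcc⟩
  have hSp : ∀ Q ∈ S, Prime Q := fun Q hQ => by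
    obtain ⟨a, b, _⟩ := (hS Q).mp hQ
    exact (Ideal.prime_iff_isPrime (hfne Q b)).mpr a
  have hP1 : P1 ∈ S := (hS _).mpr ⟨h1, hf1, rfl⟩
  have hP2 : P2 ∈ S := (hS _).mpr ⟨h2, hf2, hc.symm⟩
  have hπs : ∀ Q ∈ S, Ideal.span {π Q} = Q ^ n Q := fun Q hQ => (hπ Q (hSp Q hQ).ne_zero).2
  have hn : ∀ Q ∈ S, 0 < n Q := fun Q hQ => (hπ Q (hSp Q hQ).ne_zero).1
  have hπ0 : ∀ Q ∈ S, π Q ≠ 0 := fun Q hQ =>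
    ne_zero_of_span (pow_ne_zero _ (hSp Q hQ).ne_zero) (hπs Q hQ)
  have hπmem : ∀ Q ∈ S, π Q ∈ Q := fun Q hQ => by
    have : π Q ∈ Q ^ n Q := hπs Q hQ ▸ Ideal.mem_span_singleton_self _
    exact Ideal.pow_le_self (hn Q hQ).ne' this
  -- primes containing `π Q`
  have hπonly : ∀ Q ∈ S, ∀ P : Ideal R, P.IsPrime → π Q ∈ P → P = Q := by
    intro Q hQ P hP hm
    have : Q ^ n Q ≤ P := by
      rw [← hπs Q hQ, Ideal.span_singleton_le_iff_mem]; exact hm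
    exact (eq_of_prime_le hP (Ideal.isPrime_of_prime (hSp Q hQ)) (hSp Q hQ).ne_zero
      (hP.le_of_pow_le this)).symm
  let j : R := ∏ Q ∈ S, π Q
  have hj0 : j ≠ 0 := Finset.prod_ne_zero_iff.mpr hπ0
  have hjmem : ∀ Q ∈ S, j ∈ Q := fun Q hQ =>
    Ideal.mem_of_dvd _ (Finset.dvd_prod_of_mem π hQ) (hπmem Q hQ)
  have hjonly : ∀ P : Ideal R, P.IsPrime → j ∈ P → P ∈ S := by
    intro P hP hj
    obtain ⟨Q, hQ, hm⟩ := (hP.prod_mem_iff).mp hj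
    rw [hπonly Q hQ P hP hm]; exact hQ
  -- membership in O
  have hO : ∀ y : R, (∀ P : Ideal R, P.IsPrime → (y ∈ P ↔ P ∈ S)) → y ^ t ∈ O := by
    intro y hy
    apply idem_mem O hfg _ (hidem y)
    intro P P' hP hP' hfP hfP' hcc hyP hyP'
    have hPS : P ∈ S := (hy P hP).mp (hP.mem_of_pow_mem _ hyP)
    have hPS' : P' ∈ S := (hS P').mpr ⟨hP', hfP', hcc ▸ ((hS P).mp hPS).2.2⟩
    have : y ^ t ∈ P' := Ideal.pow_mem_of_mem _ ((hy P' hP').mpr hPS') _ ht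
    exact hP'.ne_top ((Ideal.eq_top_iff_one _).mpr (by simpa using P'.add_mem hyP' this))
  have hjO : j ^ t ∈ O := hO j (fun P hP => ⟨hjonly P hP, hjmem P⟩)
  -- step 1
  have step : ∀ A ∈ S, ∀ B ∈ S, A ≠ B → r (π B) 1 := by
    intro A hA B hB hAB
    by_contra hnr
    set s := n A + 1
    set a := (j * π B ^ s) ^ t with ha
    have haO : a ∈ O := by
      apply hO
      intro P hP
      constructor
      · intro hm
        rcases hP.mem_or_mem hm with hm | hm
        · exact hjonly P hP hm
        · rw [hπonly B hB P hP (hP.mem_of_pow_mem _ hm)]; exact hB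
      · intro hPS
        exact P.mul_mem_right _ (hjmem P hPS)
    have ha0 : a ≠ 0 := pow_ne_zero _ (mul_ne_zero hj0 (pow_ne_zero _ (hπ0 B hB)))
    have haS : ∀ P : Ideal R, P.IsPrime → a ∈ P → P ∈ S := by
      intro P hP hm
      rcases hP.mem_or_mem (hP.mem_of_pow_mem _ hm) with hm | hm
      · exact hjonly P hP hm
      · rw [hπonly B hB P hP (hP.mem_of_pow_mem _ hm)]; exact hB
    have hab : a = π B ^ (s * t) * j ^ t := by rw [ha, mul_pow, ← pow_mul]; ring
    obtain ⟨v, w, hv, hw, hvw, hvr, -⟩ := h.t2 haO ha0 (pow_ne_zero (s * t) (hπ0 B hB))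
      (pow_ne_zero t hj0) (hab ▸ h.refl a)
    have hv0 : v ≠ 0 := left_ne_zero_of_mul (hvw ▸ ha0)
    have hw0 : w ≠ 0 := right_ne_zero_of_mul (hvw ▸ ha0)
    obtain ⟨m, u, hu, -, hvm, hmO, hf2⟩ := h.t2_list (List.replicate (s * t) (π B)) v hv hv0
      (fun x hx => by rw [List.eq_of_mem_replicate hx]; exact hπ0 B hB)
      (by rw [List.prod_replicate]; exact hvr)
    obtain ⟨hlen, hmr⟩ := f2_rep _ _ hf2
    have hmne : m.prod ≠ 0 := right_ne_zero_of_mul (hvm ▸ hv0)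
    have hm0 : ∀ x ∈ m, x ≠ 0 := by
      rintro x hx rfl
      exact hmne (List.prod_eq_zero hx)
    have hfv : fac v = (m.map fac).sum := by
      rw [hvm, fac_mul hu.ne_zero hmne, fac_unit hu, zero_add, fac_list_prod m hm0]
    have hlow := sum_lower (Multiset.countAddMonoidHom A) 1 m (by
      intro x hx
      have hxnu : ¬ IsUnit x := fun hxu => hnr (h.trans (h.symm (hmr x hx))
        (h.assoc (associated_one_iff_isUnit.mpr hxu)))
      obtain ⟨Q, hQ⟩ := Multiset.exists_mem_of_ne_zero
        (fun h0 => hxnu ((fac_eq_zero (hm0 x hx)).mp h0))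
      have hxa : fac x ≤ fac a := by
        rw [hvw, fac_mul hv0 hw0, hfv]
        exact (le_sum_fac m x hx).trans (by simp)
      have hQa := ((mem_fac ha0).mp (Multiset.mem_of_le hxa hQ))
      have hQS := haS Q (Ideal.isPrime_of_prime hQa.1) hQa.2
      have hxQ := ((mem_fac (hm0 x hx)).mp hQ).2
      have : (⟨x, hmO x hx⟩ : O) ∈ Ideal.comap O.subtype Q := hxQ
      rw [((hS Q).mp hQS).2.2, ← ((hS A).mp hA).2.2] at this
      have hxA : x ∈ A := this
      have := (mem_fac (hm0 x hx)).mpr ⟨hSp A hA, hxA⟩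
      simpa [Multiset.one_le_count_iff_mem] using this)
    rw [← hfv, hlen] at hlow
    have hfacj : Multiset.count A (fac j) = n A := by
      have : ∀ T : Finset (Ideal R), T ⊆ S → fac (∏ Q ∈ T, π Q) = ∑ Q ∈ T, Multiset.replicate (n Q) Q := by
        intro T
        induction T using Finset.induction_on with
        | empty => intro _; simpa using fac_one
        | insert x T hx ih =>
          intro hT
          have hxS : x ∈ S := hT (by simp)
          have hTS : T ⊆ S := fun y hy => hT (by simp [hy])
          rw [Finset.prod_insert hx, Finset.sum_insert hx, fac_mul (hπ0 x hxS)
            (Finset.prod_ne_zero_iff.mpr (fun y hy => hπ0 y (hTS hy))), ih hTS,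
            fac_of_span_pow (hSp x hxS) (hπs x hxS)]
      rw [this S subset_rfl, Multiset.count_sum', Finset.sum_eq_single A]
      · simp
      · intro Q _ hQA
        rw [Multiset.count_replicate, if_neg hQA]
      · intro hh; exact absurd hA hh
    have hfacB : Multiset.count A (fac (π B)) = 0 := by
      rw [fac_of_span_pow (hSp B hB) (hπs B hB), Multiset.count_replicate, if_neg (Ne.symm hAB)]
    have hca : Multiset.count A (fac a) = t * n A := by
      rw [ha, fac_pow, fac_mul hj0 (pow_ne_zero _ (hπ0 B hB)), fac_pow]
      simp [hfacj, hfacB]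
    have hcv : Multiset.count A (fac v) ≤ t * n A := by
      rw [← hca, hvw, fac_mul hv0 hw0]
      simp
    have hlow' : s * t ≤ Multiset.count A (fac v) := by simpa using hlow
    have : s * t ≤ t * n A := hlow'.trans hcv
    simp only [s] at this
    nlinarith
  have hall : ∀ B ∈ S, r (π B) 1 := by
    intro B hB
    by_cases hB1 : P1 = B
    · exact step P2 hP2 B hB (fun h => hne (hB1.trans h.symm))
    · exact step P1 hP1 B hB hB1
  have hj1 : r j 1 := by
    have : ∀ T : Finset (Ideal R), T ⊆ S → r (∏ Q ∈ T, π Q) 1 := by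
      intro T
      induction T using Finset.induction_on with
      | empty => intro _; simpa using h.refl 1
      | insert x T hx ih =>
        intro hT
        rw [Finset.prod_insert hx]
        simpa using h.mul (hall x (hT (by simp))) (ih (fun y hy => hT (by simp [hy])))
    exact this S subset_rfl
  have hju := h.unit hjO (pow_ne_zero _ hj0) (by simpa using h.pow hj1 t)
  exact h1.ne_top (Ideal.eq_top_of_isUnit_mem _ (Ideal.pow_mem_of_mem _ (hjmem P1 hP1) _ ht) hju)

end PartD

open scoped nonZeroDivisors

section PartE
open UniqueFactorizationMonoid
variable {R : Type*} [CommRing R] [IsDedekindDomain R]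

/-- The working setup. -/
structure SU (O : Subring R) (r : R → R → Prop) (t : ℕ) : Prop extends TR O r where
  f0 : O.conductor ≠ 0
  tpos : 0 < t
  tor : ∀ c : ClassGroup R, ∃ n : ℕ, 0 < n ∧ c ^ n = 1
  idemt : ∀ x : R, x ^ t * x ^ t - x ^ t ∈ O.conductor
  idemO : ∀ e : R, e * e - e ∈ O.conductor → e ∈ O
  cls : ∀ c : ClassGroup R, ∃ Q : Ideal R, Prime Q ∧ IsCoprime Q O.conductor ∧ clG Q = c

lemma coprime_of_prime {Q f : Ideal R} (hQ : Prime Q) (h : ¬ f ≤ Q) : IsCoprime Q f := by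
  rw [Ideal.isCoprime_iff_sup_eq]
  have hm := (Ideal.isPrime_of_prime hQ).isMaximal hQ.ne_zero
  by_contra hne
  have := hm.eq_of_le hne le_sup_left
  exact h (by rw [this]; exact le_sup_right)

lemma not_le_of_coprime {Q f : Ideal R} (hQ : Prime Q) (h : IsCoprime Q f) : ¬ f ≤ Q := by
  intro hle
  rw [Ideal.isCoprime_iff_sup_eq, sup_eq_left.mpr hle] at h
  exact (Ideal.isPrime_of_prime hQ).ne_top h

/-- `A` is generated by an element of `O`. -/
def OP (O : Subring R) (A : Ideal R) : Prop := ∃ a ∈ O, Ideal.span {a} = A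

lemma OP.mul {O : Subring R} {A B : Ideal R} (hA : OP O A) (hB : OP O B) : OP O (A * B) := by
  obtain ⟨a, ha, rfl⟩ := hA
  obtain ⟨b, hb, rfl⟩ := hB
  exact ⟨a * b, O.mul_mem ha hb, (Ideal.span_singleton_mul_span_singleton _ _).symm⟩

lemma two_le_card {w : R} (hw : w ≠ 0) (hu : ¬ IsUnit w) (h : ∀ Q ∈ fac w, clG Q ≠ 1) :
    2 ≤ (fac w).card := by
  by_contra hlt
  have : (fac w).card = 0 ∨ (fac w).card = 1 := by omega
  rcases this with h0 | h1
  · exact hu ((fac_eq_zero hw).mp (Multiset.card_eq_zero.mp h0))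
  · obtain ⟨Q, hQ⟩ := Multiset.card_eq_one.mp h1
    have := clG_fac hw
    rw [hQ] at this
    exact h Q (by rw [hQ]; simp) (by simpa using this)

lemma not_unit_of_fac {w : R} (h : fac w ≠ 0) : ¬ IsUnit w := fun hu => h (fac_unit hu)

lemma fac_two {x : R} {P Q : Ideal R} (hP : Prime P) (hQ : Prime Q)
    (h : Ideal.span {x} = P * Q) : fac x = {P, Q} := by
  apply fac_of_span
  · intro X hX
    simp only [Multiset.insert_eq_cons, Multiset.mem_cons, Multiset.mem_singleton] at hX
    rcases hX with rfl | rfl <;> assumption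
  · simp [h]

namespace SU
variable {O : Subring R} {r : R → R → Prop} {t : ℕ}

lemma powO (h : SU O r t) (x : R) : x ^ t ∈ O := h.idemO _ (h.idemt x)

lemma unit' (h : SU O r t) {x : R} (hx : x ≠ 0) (hr : r x 1) : IsUnit x := by
  have := h.unit (h.powO x) (pow_ne_zero _ hx) (by simpa using h.toTR.pow hr t)
  exact (isUnit_pow_iff h.tpos.ne').mp this

lemma nonunit (h : SU O r t) {x y : R} (hx : ¬ IsUnit x) (hx0 : x ≠ 0) (hr : r y x) :
    ¬ IsUnit y := fun hy => hx (h.unit' hx0 (h.trans (h.symm hr)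
      (h.assoc (associated_one_iff_isUnit.mpr hy))))

/-- lifting a factorization of an element of `O`. -/
lemma lift (h : SU O r t) {a : R} (ha : a ∈ O) (ha0 : a ≠ 0) (l : List R)
    (hl : ∀ y ∈ l, y ≠ 0 ∧ ¬ IsUnit y) (hr : r a l.prod) :
    ∃ m : List R, m.length = l.length ∧ (∀ w ∈ m, w ∈ O ∧ w ≠ 0 ∧ ¬ IsUnit w ∧ ∃ y ∈ l, r w y) ∧
      fac a = (m.map fac).sum ∧ ∃ u, IsUnit u ∧ u ∈ O ∧ a = u * m.prod := by
  obtain ⟨m, u, hu, huO, ham, hmO, hf2⟩ := h.t2_list l a ha ha0 (fun y hy => (hl y hy).1) hr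
  have hmne : m.prod ≠ 0 := right_ne_zero_of_mul (ham ▸ ha0)
  have hm0 : ∀ x ∈ m, x ≠ 0 := by
    rintro x hx rfl
    exact hmne (List.prod_eq_zero hx)
  refine ⟨m, hf2.length_eq, ?_, ?_, u, hu, huO, ham⟩
  · intro w hw
    obtain ⟨y, hy, hwy⟩ := f2_mem _ _ hf2 w hw
    exact ⟨hmO w hw, hm0 w hw, h.nonunit (hl y hy).2 (hl y hy).1 hwy, y, hy, hwy⟩
  · rw [ham, fac_mul hu.ne_zero hmne, fac_unit hu, zero_add, fac_list_prod m hm0]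

/-- lifting up to `t`-th powers. -/
lemma pieces (h : SU O r t) {x : R} (hx : x ≠ 0) (l : List R)
    (hl : ∀ y ∈ l, y ≠ 0 ∧ ¬ IsUnit y) (hr : r x l.prod) :
    ∃ m : List R, m.length = t * l.length ∧
      (∀ w ∈ m, w ∈ O ∧ w ≠ 0 ∧ ¬ IsUnit w ∧ ∃ y ∈ l, r w y) ∧
      t • fac x = (m.map fac).sum := by
  have hmem : ∀ y ∈ (List.replicate t l).flatten, y ∈ l := by
    intro y hy
    obtain ⟨l', hl', hy⟩ := List.mem_flatten.mp hy
    rw [List.eq_of_mem_replicate hl'] at hy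
    exact hy
  obtain ⟨m, h1, h2, h3, -⟩ := h.lift (h.powO x) (pow_ne_zero t hx) (List.replicate t l).flatten
    (fun y hy => hl y (hmem y hy))
    (by rw [List.prod_flatten, List.map_replicate, List.prod_replicate]; exact h.toTR.pow hr t)
  refine ⟨m, ?_, ?_, ?_⟩
  · rw [h1]; simp
  · intro w hw
    obtain ⟨a, b, c, y, hy, d⟩ := h2 w hw
    exact ⟨a, b, c, y, hmem y hy, d⟩
  · rw [← fac_pow, h3]

lemma deg (h : SU O r t) {x : R} (hx : x ≠ 0) (hc : ∀ Q ∈ fac x, clG Q ≠ 1) (l : List R)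
    (hl : ∀ y ∈ l, y ≠ 0 ∧ ¬ IsUnit y) (hr : r x l.prod) : 2 * l.length ≤ (fac x).card := by
  obtain ⟨m, h1, h2, h3⟩ := h.pieces hx l hl hr
  have := sum_lower Multiset.cardHom 2 m (by
    intro w hw
    obtain ⟨-, b, c, -⟩ := h2 w hw
    apply two_le_card b c
    intro Q hQ
    have hQ' : Q ∈ t • fac x := by
      rw [h3]; exact Multiset.mem_of_le (le_sum_fac m w hw) hQ
    exact hc Q (Multiset.mem_of_mem_nsmul hQ'))
  rw [← h3, h1] at this
  simp only [map_nsmul, Multiset.cardHom_apply, smul_eq_mul] at this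
  have ht := h.tpos
  have h5 : t * (2 * l.length) ≤ t * (fac x).card := by linarith
  exact Nat.le_of_mul_le_mul_left h5 ht

lemma one_sided (h : SU O r t) {P Q : Ideal R} (hP : Prime P) (hQ : Prime Q) {ρ w : R}
    (hρ : Ideal.span {ρ} = P * Q) (hQ1 : clG Q ≠ 1) (hw0 : w ≠ 0) (hr : r w ρ) {j : ℕ}
    (hw : fac w = Multiset.replicate j Q) : j = 2 ∧ clG Q ^ 2 = 1 := by
  have hρ0 : ρ ≠ 0 := ne_zero_of_span (mul_ne_zero hP.ne_zero hQ.ne_zero) hρ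
  have hfρ := fac_two hP hQ hρ
  have hρu : ¬ IsUnit ρ := not_unit_of_fac (by rw [hfρ]; simp)
  have hPQ : clG P * clG Q = 1 := by
    rw [← clG_mul hP.ne_zero hQ.ne_zero, ← hρ, clG_span hρ0]
  have hQj : clG Q ^ j = 1 := by
    have := clG_fac hw0
    rw [hw] at this; simpa using this
  have hPj : clG P ^ j = 1 := by
    have : (clG P * clG Q) ^ j = 1 := by rw [hPQ, one_pow]
    rwa [mul_pow, hQj, mul_one] at this
  have hP1 : clG P ≠ 1 := by
    intro h1; rw [h1, one_mul] at hPQ; exact hQ1 hPQ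
  rw [← clG_pow hP.ne_zero] at hPj
  obtain ⟨σ, hσ⟩ := (clG_eq_one_iff (pow_ne_zero _ hP.ne_zero)).mp hPj
  have hσ0 : σ ≠ 0 := ne_zero_of_span (pow_ne_zero _ hP.ne_zero) hσ
  have hj0 : j ≠ 0 := by
    rintro rfl
    exact h.nonunit hρu hρ0 hr ((fac_eq_zero hw0).mp (by simpa using hw))
  have hj1 : j ≠ 1 := by
    rintro rfl
    exact hQ1 (by simpa using hQj)
  obtain ⟨k, rfl⟩ := Nat.exists_eq_add_of_le' (Nat.pos_of_ne_zero hj0)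
  have has : Associated (w * σ) (ρ ^ (k + 1)) := by
    apply assoc_of_fac (mul_ne_zero hw0 hσ0) (pow_ne_zero _ hρ0)
    rw [fac_mul hw0 hσ0, fac_pow, hw, hfρ, fac_of_span_pow hP hσ, Multiset.insert_eq_cons,
      ← Multiset.singleton_add, nsmul_add, Multiset.nsmul_singleton, Multiset.nsmul_singleton,
      add_comm]
  have h1 : r (σ * ρ) (ρ ^ k * ρ) := by
    rw [← pow_succ]
    refine h.trans ?_ (h.assoc has)
    rw [mul_comm]
    exact h.mul (h.symm hr) (h.refl σ)
  have h2 := h.cancel hρ0 h1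
  have := h.deg hσ0 (fun X hX => by
      rw [fac_of_span_pow hP hσ] at hX
      rw [Multiset.eq_of_mem_replicate hX]; exact hP1) (List.replicate k ρ)
    (fun y hy => by rw [List.eq_of_mem_replicate hy]; exact ⟨hρ0, hρu⟩)
    (by rw [List.prod_replicate]; exact h2)
  rw [fac_of_span_pow hP hσ, Multiset.card_replicate, List.length_replicate] at this
  have hk : k = 1 := by omega
  subst hk
  exact ⟨rfl, hQj⟩

lemma pair (h : SU O r t) {P Q : Ideal R} (hP : Prime P) (hQ : Prime Q) (hne : P ≠ Q) {ρ w : R}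
    (hρ : Ideal.span {ρ} = P * Q) (hP1 : clG P ≠ 1) (hw0 : w ≠ 0) (hr : r w ρ)
    (hw : ∀ X ∈ fac w, X = P ∨ X = Q) :
    fac w = {P, Q} ∨ (clG P ^ 2 = 1 ∧ (fac w = {P, P} ∨ fac w = {Q, Q})) := by
  classical
  have hρ0 : ρ ≠ 0 := ne_zero_of_span (mul_ne_zero hP.ne_zero hQ.ne_zero) hρ
  have hfρ := fac_two hP hQ hρ
  have hPQ : clG P * clG Q = 1 := by
    rw [← clG_mul hP.ne_zero hQ.ne_zero, ← hρ, clG_span hρ0]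
  have hQ1 : clG Q ≠ 1 := by
    intro h1; rw [h1, mul_one] at hPQ; exact hP1 hPQ
  by_cases hPw : P ∈ fac w
  · by_cases hQw : Q ∈ fac w
    · left
      have hle : fac ρ ≤ fac w := by
        rw [hfρ, Multiset.le_iff_subset]
        · intro X hX
          simp only [Multiset.insert_eq_cons, Multiset.mem_cons, Multiset.mem_singleton] at hX
          rcases hX with rfl | rfl <;> assumption
        · simp [hne]
      have hdvd : ρ ∣ w := by
        have := (dvd_iff_normalizedFactors_le_normalizedFactors (span_ne_bot hρ0)
          (span_ne_bot hw0)).mpr hle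
        rw [Ideal.dvd_iff_le, Ideal.span_singleton_le_span_singleton] at this
        exact this
      obtain ⟨s, rfl⟩ := hdvd
      have hs0 : s ≠ 0 := right_ne_zero_of_mul hw0
      have hs : IsUnit s := h.unit' hs0 (h.cancel hρ0 (by simpa [mul_comm] using hr))
      rw [fac_mul hρ0 hs0, fac_unit hs, add_zero, hfρ]
    · right
      have h1 : fac w = Multiset.replicate (fac w).card P := by
        rw [Multiset.eq_replicate]
        refine ⟨rfl, fun X hX => ?_⟩
        rcases hw X hX with rfl | rfl
        · rfl
        · exact absurd hX hQw
      obtain ⟨a, b⟩ := h.one_sided hQ hP (by rw [hρ, mul_comm]) hP1 hw0 hr h1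
      rw [a] at h1
      exact ⟨b, Or.inl h1⟩
  · right
    have h1 : fac w = Multiset.replicate (fac w).card Q := by
      rw [Multiset.eq_replicate]
      refine ⟨rfl, fun X hX => ?_⟩
      rcases hw X hX with rfl | rfl
      · exact absurd hX hPw
      · rfl
    obtain ⟨a, b⟩ := h.one_sided hP hQ hρ hQ1 hw0 hr h1
    rw [a] at h1
    refine ⟨?_, Or.inr h1⟩
    have : (clG P * clG Q) ^ 2 = 1 := by rw [hPQ, one_pow]
    rwa [mul_pow, b, mul_one] at this

lemma cancelO (h : SU O r t) {γ b : R} (hγ : γ ∈ O) (hc : IsCoprime (Ideal.span {γ}) O.conductor)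
    (hb : γ * b ∈ O) : b ∈ O := by
  have hu : ∃ x c, c ∈ O.conductor ∧ x * γ + c = 1 := by
    obtain ⟨i, hi, j, hj, hij⟩ := Ideal.isCoprime_iff_exists.mp hc
    obtain ⟨x, rfl⟩ := Ideal.mem_span_singleton'.mp hi
    exact ⟨x, j, hj, hij⟩
  obtain ⟨x, c, hcf, hxc⟩ := hu
  -- γ^t ≡ 1
  have h1 : γ ^ t - 1 ∈ O.conductor := by
    have hm := h.idemt γ
    rw [← Ideal.Quotient.eq_zero_iff_mem] at hm hcf ⊢
    have hx : Ideal.Quotient.mk O.conductor x * Ideal.Quotient.mk O.conductor γ = 1 := by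
      have := congrArg (Ideal.Quotient.mk O.conductor) hxc
      rwa [map_add, map_mul, hcf, add_zero, map_one] at this
    have hxt : Ideal.Quotient.mk O.conductor x ^ t * Ideal.Quotient.mk O.conductor γ ^ t = 1 := by
      rw [← mul_pow, hx, one_pow]
    simp only [map_sub, map_mul, map_pow, map_one] at hm ⊢
    linear_combination (Ideal.Quotient.mk O.conductor x ^ t) * hm -
      (Ideal.Quotient.mk O.conductor γ ^ t - 1) * hxt
  obtain ⟨k, hk⟩ := Nat.exists_eq_add_of_le' h.tpos
  have h2 : γ ^ k * (γ * b) ∈ O := O.mul_mem (O.pow_mem hγ k) hb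
  have h3 : (γ ^ t - 1) * b ∈ O := h1 b
  have : b = γ ^ k * (γ * b) - (γ ^ t - 1) * b := by rw [hk]; ring
  rw [this]
  exact O.sub_mem h2 h3

lemma OP_cancel (h : SU O r t) {A B : Ideal R} (hA0 : A ≠ 0) (hc : IsCoprime A O.conductor)
    (hA : OP O A) (hAB : OP O (A * B)) : OP O B := by
  obtain ⟨a, ha, rfl⟩ := hA
  obtain ⟨c, hc', hcB⟩ := hAB
  have ha0 : a ≠ 0 := by
    rintro rfl
    simp at hA0
  have hdvd : a ∣ c := by
    have : Ideal.span {c} ≤ Ideal.span {a} := hcB ▸ (Ideal.mul_le_left : Ideal.span {a} * B ≤ Ideal.span {a})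
    exact (Ideal.span_singleton_le_span_singleton).mp this
  obtain ⟨b, rfl⟩ := hdvd
  refine ⟨b, h.cancelO ha hc hc', ?_⟩
  rw [← Ideal.span_singleton_mul_span_singleton] at hcB
  exact mul_left_cancel₀ (span_ne_bot ha0) hcB

end SU
end PartE

lemma enum6 {G I : Type*} [AddCommGroup G] (c : I → G) (a b d a' b' d' : I)
   (ha : c a ≠ 0) (hb : c b ≠ 0) (hd : c d ≠ 0) (ha' : c a' = - c a) (hb' : c b' = - c b)
   (hd' : c d' = - c d) (hs : c a + c b + c d = 0)
   (ia : c a + c a = 0 → a' = a) (ib : c b + c b = 0 → b' = b) (id : c d + c d = 0 → d' = d)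
   (s : Multiset I) (hle : s ≤ {a,b,d,a',b',d'}) (h3 : s.card = 3) (hsum : (s.map c).sum = 0) :
   s = {a,b,d} ∨ s = {a',b',d'} := by
  have : s ∈ Multiset.powersetCard 3 {a,b,d,a',b',d'} := Multiset.mem_powersetCard.mpr ⟨hle, h3⟩
  simp only [Multiset.insert_eq_cons, ← Multiset.cons_zero, Multiset.powersetCard_cons,
    Multiset.powersetCard_zero_left, Multiset.powersetCard_zero_right, Multiset.map_add,
    Multiset.map_cons, Multiset.map_zero, Multiset.mem_add, Multiset.mem_cons,
    Multiset.notMem_zero, zero_add, or_false, false_or, or_assoc] at this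
  have e1 : c d = - c a - c b := by grind
  rcases this with h | h | h | h | h | h | h | h | h | h | h | h | h | h | h | h | h | h | h | h <;>
    subst h <;> simp only [Multiset.map_cons, Multiset.sum_cons, Multiset.map_zero,
      Multiset.sum_zero, ha', hb', hd', add_zero] at hsum <;>
    simp only [Multiset.insert_eq_cons, ← Multiset.singleton_add, add_zero]
  all_goals first
    | exact Or.inl trivial
    | exact Or.inr trivial
    | (left; abel; done)
    | (right; abel; done)
    | (exfalso; grind)
    | (have h1 : c a + c a = 0 := by grind
       rw [ia h1]; first | (left; abel; done) | (right; abel; done))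
    | (have h1 : c b + c b = 0 := by grind
       rw [ib h1]; first | (left; abel; done) | (right; abel; done))
    | (have h1 : c d + c d = 0 := by grind
       rw [id h1]; first | (left; abel; done) | (right; abel; done))

open scoped nonZeroDivisors

section PartF
open UniqueFactorizationMonoid
variable {R : Type*} [CommRing R] [IsDedekindDomain R]

/-- regular prime ideals -/
def RP (O : Subring R) (Q : Ideal R) : Prop := Prime Q ∧ IsCoprime Q O.conductor

lemma span_of_fac {w : R} (hw : w ≠ 0) {m : Multiset (Ideal R)} (h : fac w = m) :
    Ideal.span {w} = m.prod := by rw [← h, fac_prod hw]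

namespace SU
variable {O : Subring R} {r : R → R → Prop} {t : ℕ}

lemma fac_sub_of_sum {m : List R} {x w : R} {t : ℕ} (h : t • fac x = (m.map fac).sum)
    (hw : w ∈ m) {X : Ideal R} (hX : X ∈ fac w) : X ∈ fac x := by
  have hQ' : X ∈ t • fac x := by
    rw [h]; exact Multiset.mem_of_le (le_sum_fac m w hw) hX
  exact Multiset.mem_of_mem_nsmul hQ'

lemma piece_one (h : SU O r t) {x : R} (hx : x ≠ 0) (hu : ¬ IsUnit x) (k : ℕ)
    (hk : (fac x).card = k) (hlow : ∀ w : R, w ≠ 0 → ¬ IsUnit w → (∀ X ∈ fac w, X ∈ fac x) →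
      k ≤ (fac w).card) :
    ∃ w ∈ O, w ≠ 0 ∧ r w x ∧ (fac w).card = k ∧ (∀ X ∈ fac w, X ∈ fac x) := by
  obtain ⟨m, h1, h2, h3⟩ := h.pieces hx [x] (by simp [hx, hu]) (by simpa using h.refl x)
  have hm : m ≠ [] := by
    rintro rfl
    simp at h1
    exact h.tpos.ne h1
  obtain ⟨w, hw⟩ := List.exists_mem_of_ne_nil m hm
  have := sum_tight Multiset.cardHom k m (fun w hw => hlow w (h2 w hw).2.1 (h2 w hw).2.2.1
      (fun X hX => fac_sub_of_sum h3 hw hX)) (by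
    rw [← h3, h1]; simp [hk, mul_comm]) w hw
  obtain ⟨a, b, c, y, hy, d⟩ := h2 w hw
  simp only [List.mem_singleton] at hy
  subst hy
  exact ⟨w, a, b, d, this, fun X hX => fac_sub_of_sum h3 hw hX⟩

lemma one_le_card {w : R} (hw : w ≠ 0) (hu : ¬ IsUnit w) : 1 ≤ (fac w).card := by
  rw [Nat.one_le_iff_ne_zero]
  intro h0
  exact hu ((fac_eq_zero hw).mp (Multiset.card_eq_zero.mp h0))

lemma S1 (h : SU O r t) {Q : Ideal R} (hQ : Prime Q) (h1 : clG Q = 1) : OP O Q := by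
  obtain ⟨q, hq⟩ := (clG_eq_one_iff hQ.ne_zero).mp h1
  have hq0 := ne_zero_of_span hQ.ne_zero hq
  have hf : fac q = {Q} := fac_of_span _ (by simpa using hQ) (by simpa using hq)
  obtain ⟨w, hw, hw0, -, hc, hX⟩ := h.piece_one hq0 (not_unit_of_fac (by rw [hf]; simp)) 1
    (by rw [hf]; simp) (fun w hw hu _ => one_le_card hw hu)
  obtain ⟨X, hXw⟩ := Multiset.card_eq_one.mp hc
  have : X = Q := by
    have := hX X (by rw [hXw]; simp)
    rwa [hf, Multiset.mem_singleton] at this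
  subst this
  exact ⟨w, hw, by simpa using span_of_fac hw0 hXw⟩

lemma S2 (h : SU O r t) {Q : Ideal R} (hQ : Prime Q) (h1 : clG Q ≠ 1) (h2 : clG Q ^ 2 = 1) :
    OP O (Q * Q) := by
  rw [← clG_pow hQ.ne_zero] at h2
  obtain ⟨q, hq⟩ := (clG_eq_one_iff (pow_ne_zero _ hQ.ne_zero)).mp h2
  have hq0 := ne_zero_of_span (pow_ne_zero _ hQ.ne_zero) hq
  have hf := fac_of_span_pow hQ hq
  obtain ⟨w, hw, hw0, -, hc, hX⟩ := h.piece_one hq0 (not_unit_of_fac (by rw [hf]; simp)) 2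
    (by rw [hf]; simp) (fun w hw hu hX => two_le_card hw hu (by
      intro Y hY
      have := hX Y hY
      rw [hf] at this
      rw [Multiset.eq_of_mem_replicate this]; exact h1))
  have : fac w = Multiset.replicate 2 Q := by
    rw [Multiset.eq_replicate]
    refine ⟨hc, fun X hXw => ?_⟩
    have := hX X hXw
    rw [hf] at this
    exact Multiset.eq_of_mem_replicate this
  refine ⟨w, hw, ?_⟩
  rw [span_of_fac hw0 this]; simp [pow_two]

lemma S2' (h : SU O r t) {Q Q' : Ideal R} (hQ : Prime Q) (hQ' : Prime Q') (h1 : clG Q ≠ 1)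
    (h2 : clG Q ^ 2 ≠ 1) (hQQ : clG Q * clG Q' = 1) :
    OP O (Q * Q') := by
  have hne0 := mul_ne_zero hQ.ne_zero hQ'.ne_zero
  rw [← clG_mul hQ.ne_zero hQ'.ne_zero] at hQQ
  obtain ⟨q, hq⟩ := (clG_eq_one_iff hne0).mp hQQ
  have hq0 := ne_zero_of_span hne0 hq
  have hf := fac_two hQ hQ' hq
  have hne : Q ≠ Q' := by
    rintro rfl
    rw [clG_mul hQ.ne_zero hQ.ne_zero] at hQQ
    exact h2 (by rw [pow_two]; exact hQQ)
  obtain ⟨m, m1, m2, m3⟩ := h.pieces hq0 [q]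
    (by simp [hq0, not_unit_of_fac (w := q) (by rw [hf]; simp)]) (by simpa using h.refl q)
  have hm : m ≠ [] := by
    rintro rfl
    simp at m1
    exact h.tpos.ne m1
  obtain ⟨w, hw⟩ := List.exists_mem_of_ne_nil m hm
  obtain ⟨a, b, c, y, hy, d⟩ := m2 w hw
  simp only [List.mem_singleton] at hy
  subst hy
  rcases h.pair hQ hQ' hne hq h1 b d (fun X hX => by
    have := fac_sub_of_sum m3 hw hX
    rw [hf] at this
    simpa using this) with h3 | h3
  · exact ⟨w, a, by simpa using span_of_fac b h3⟩
  · exact absurd h3.1 h2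

lemma S3 (h : SU O r t) {Q : Ideal R} (hQ : RP O Q) :
    ∃ Q', RP O Q' ∧ clG Q' = (clG Q)⁻¹ ∧ OP O (Q * Q') ∧ (clG Q ^ 2 = 1 → Q' = Q) := by
  by_cases h1 : clG Q = 1
  · exact ⟨Q, hQ, by simp [h1], (h.S1 hQ.1 h1).mul (h.S1 hQ.1 h1), fun _ => rfl⟩
  by_cases h2 : clG Q ^ 2 = 1
  · refine ⟨Q, hQ, ?_, h.S2 hQ.1 h1 h2, fun _ => rfl⟩
    rw [pow_two] at h2
    exact eq_inv_of_mul_eq_one_left h2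
  · obtain ⟨Q', a, b, c⟩ := h.cls (clG Q)⁻¹
    exact ⟨Q', ⟨a, b⟩, c, h.S2' hQ.1 a h1 h2 (by rw [c]; simp), fun h3 => absurd h3 h2⟩

lemma fac_three {x : R} {P Q S : Ideal R} (hP : Prime P) (hQ : Prime Q) (hS : Prime S)
    (h : Ideal.span {x} = P * Q * S) : fac x = {P, Q, S} := by
  apply fac_of_span
  · intro X hX
    simp only [Multiset.insert_eq_cons, Multiset.mem_cons, Multiset.mem_singleton] at hX
    rcases hX with rfl | rfl | rfl <;> assumption
  · simp [h, mul_assoc]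

set_option maxHeartbeats 1000000 in
lemma S4 (h : SU O r t) {Q₁ Q₂ Q₃ : Ideal R} (h1 : RP O Q₁) (h2 : RP O Q₂) (h3 : RP O Q₃)
    (n1 : clG Q₁ ≠ 1) (n2 : clG Q₂ ≠ 1) (n3 : clG Q₃ ≠ 1)
    (hp : clG Q₁ * clG Q₂ * clG Q₃ = 1) : OP O (Q₁ * Q₂ * Q₃) := by
  obtain ⟨S₁, s1, i1, o1, e1⟩ := h.S3 h1
  obtain ⟨S₂, s2, i2, o2, e2⟩ := h.S3 h2
  obtain ⟨S₃, s3, i3, o3, e3⟩ := h.S3 h3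
  have q1 := h1.1.ne_zero
  have q2 := h2.1.ne_zero
  have q3 := h3.1.ne_zero
  have z1 := s1.1.ne_zero
  have z2 := s2.1.ne_zero
  have z3 := s3.1.ne_zero
  have hα0 : Q₁ * Q₂ * Q₃ ≠ 0 := mul_ne_zero (mul_ne_zero q1 q2) q3
  have hβ0 : S₁ * S₂ * S₃ ≠ 0 := mul_ne_zero (mul_ne_zero z1 z2) z3
  obtain ⟨α, hα⟩ := (clG_eq_one_iff hα0).mp (by
    rw [clG_mul (mul_ne_zero q1 q2) q3, clG_mul q1 q2, hp])
  obtain ⟨β, hβ⟩ := (clG_eq_one_iff hβ0).mp (by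
    rw [clG_mul (mul_ne_zero z1 z2) z3, clG_mul z1 z2, i1, i2, i3, ← mul_inv, ← mul_inv, hp,
      inv_one])
  have α0 := ne_zero_of_span hα0 hα
  have β0 := ne_zero_of_span hβ0 hβ
  have fα := fac_three h1.1 h2.1 h3.1 hα
  have fβ := fac_three s1.1 s2.1 s3.1 hβ
  obtain ⟨a₁, a1, b1⟩ := o1
  obtain ⟨a₂, a2, b2⟩ := o2
  obtain ⟨a₃, a3, b3⟩ := o3
  have c1 := ne_zero_of_span (mul_ne_zero q1 z1) b1
  have c2 := ne_zero_of_span (mul_ne_zero q2 z2) b2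
  have c3 := ne_zero_of_span (mul_ne_zero q3 z3) b3
  have f1 := fac_two h1.1 s1.1 b1
  have f2 := fac_two h2.1 s2.1 b2
  have f3 := fac_two h3.1 s3.1 b3
  have ha0 : a₁ * a₂ * a₃ ≠ 0 := mul_ne_zero (mul_ne_zero c1 c2) c3
  have has : Associated (a₁ * a₂ * a₃) (α * β) := by
    apply assoc_of_fac ha0 (mul_ne_zero α0 β0)
    rw [fac_mul (mul_ne_zero c1 c2) c3, fac_mul c1 c2, fac_mul α0 β0, fα, fβ, f1, f2, f3]
    simp only [Multiset.insert_eq_cons, ← Multiset.singleton_add]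
    abel
  obtain ⟨v, w, hv, hw, hvw, rv, rw'⟩ := h.t2 (O.mul_mem (O.mul_mem a1 a2) a3) ha0 α0 β0
    (h.assoc has)
  have hv0 : v ≠ 0 := left_ne_zero_of_mul (hvw ▸ ha0)
  have hw0 : w ≠ 0 := right_ne_zero_of_mul (hvw ▸ ha0)
  have hsum : fac v + fac w = {Q₁, Q₂, Q₃, S₁, S₂, S₃} := by
    rw [← fac_mul hv0 hw0, ← hvw, fac_assoc has, fac_mul α0 β0, fα, fβ]
    simp only [Multiset.insert_eq_cons, ← Multiset.singleton_add]
    abel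
  have hab : fac α + fac β = {Q₁, Q₂, Q₃, S₁, S₂, S₃} := by
    rw [← fac_mul α0 β0, ← fac_assoc has, hvw, fac_mul hv0 hw0, hsum]
  have ncl : ∀ X ∈ ({Q₁, Q₂, Q₃, S₁, S₂, S₃} : Multiset (Ideal R)), clG X ≠ 1 := by
    intro X hX
    simp only [Multiset.insert_eq_cons, Multiset.mem_cons, Multiset.mem_singleton] at hX
    rcases hX with rfl | rfl | rfl | rfl | rfl | rfl <;>
      simp only [i1, i2, i3, ne_eq, inv_eq_one] <;> assumption
  have hlist : ∀ y ∈ [a₁, a₂, a₃], y ≠ 0 ∧ ¬ IsUnit y := by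
    intro y hy
    simp only [List.mem_cons, List.not_mem_nil, or_false] at hy
    rcases hy with rfl | rfl | rfl
    · exact ⟨c1, not_unit_of_fac (by rw [f1]; simp)⟩
    · exact ⟨c2, not_unit_of_fac (by rw [f2]; simp)⟩
    · exact ⟨c3, not_unit_of_fac (by rw [f3]; simp)⟩
  have hprodl : [a₁, a₂, a₃].prod = a₁ * a₂ * a₃ := by simp [mul_assoc]
  have dv : 2 * 3 ≤ (fac (v * β)).card := by
    refine h.deg (mul_ne_zero hv0 β0) ?_ [a₁, a₂, a₃] hlist ?_
    · intro X hX
      rw [fac_mul hv0 β0, Multiset.mem_add] at hX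
      rcases hX with hX | hX
      · exact ncl X (by rw [← hsum]; exact Multiset.mem_add.mpr (Or.inl hX))
      · exact ncl X (by rw [← hab]; exact Multiset.mem_add.mpr (Or.inr hX))
    · rw [hprodl]
      exact h.trans (h.mul rv (h.refl β)) (h.symm (h.assoc has))
  have dw : 2 * 3 ≤ (fac (w * α)).card := by
    refine h.deg (mul_ne_zero hw0 α0) ?_ [a₁, a₂, a₃] hlist ?_
    · intro X hX
      rw [fac_mul hw0 α0, Multiset.mem_add] at hX
      rcases hX with hX | hX
      · exact ncl X (by rw [← hsum]; exact Multiset.mem_add.mpr (Or.inr hX))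
      · exact ncl X (by rw [← hab]; exact Multiset.mem_add.mpr (Or.inl hX))
    · rw [hprodl]
      refine h.trans (h.mul rw' (h.refl α)) (h.symm (h.assoc ?_))
      rw [mul_comm β α]; exact has
  have hcs := congrArg Multiset.card hsum
  rw [fac_mul hv0 β0, fβ] at dv
  rw [fac_mul hw0 α0, fα] at dw
  simp at dv dw hcs
  have hv3 : (fac v).card = 3 := by omega
  have key := enum6 (fun X : Ideal R => Additive.ofMul (clG X)) Q₁ Q₂ Q₃ S₁ S₂ S₃
    (by simpa using n1) (by simpa using n2) (by simpa using n3) (by simp [i1]) (by simp [i2])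
    (by simp [i3]) (by rw [← ofMul_mul, ← ofMul_mul, hp]; rfl)
    (fun hh => e1 (by rw [pow_two]; exact hh)) (fun hh => e2 (by rw [pow_two]; exact hh))
    (fun hh => e3 (by rw [pow_two]; exact hh)) (fac v) (by rw [← hsum]; simp) hv3 (by
      have := clG_fac hv0
      have h5 := congrArg Additive.ofMul this
      rw [ofMul_multiset_prod, Multiset.map_map] at h5
      exact h5)
  rcases key with key | key
  · exact ⟨v, hv, by rw [span_of_fac hv0 key]; simp [mul_assoc]⟩
  · refine ⟨w, hw, ?_⟩
    have : fac w = {Q₁, Q₂, Q₃} := by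
      have h6 : fac v + fac w = fac v + {Q₁, Q₂, Q₃} := by
        rw [hsum, key]
        simp only [Multiset.insert_eq_cons, ← Multiset.singleton_add]
        abel
      exact add_left_cancel h6
    rw [span_of_fac hw0 this]; simp [mul_assoc]

lemma RP.ne_zero {Q : Ideal R} (h : RP O Q) : Q ≠ 0 := h.1.ne_zero

lemma S5 (h : SU O r t) (hG : ∃ g k : ClassGroup R, g ≠ 1 ∧ k ≠ 1 ∧ g ≠ k)
    {Q₁ Q₂ : Ideal R} (h1 : RP O Q₁) (h2 : RP O Q₂) : ∃ Q₃, RP O Q₃ ∧ OP O (Q₁ * Q₂ * Q₃) := by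
  by_cases n1 : clG Q₁ = 1
  · obtain ⟨S, s1, s2, s3, -⟩ := h.S3 h2
    refine ⟨S, s1, ?_⟩
    rw [mul_assoc]
    exact (h.S1 h1.1 n1).mul s3
  by_cases n2 : clG Q₂ = 1
  · obtain ⟨S, s1, s2, s3, -⟩ := h.S3 h1
    refine ⟨S, s1, ?_⟩
    have := (h.S1 h2.1 n2).mul s3
    rwa [show Q₂ * (Q₁ * S) = Q₁ * Q₂ * S by ring] at this
  by_cases n12 : clG Q₁ * clG Q₂ = 1
  · obtain ⟨k, k1, k2⟩ : ∃ k : ClassGroup R, k ≠ 1 ∧ k ≠ (clG Q₁)⁻¹ := by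
      obtain ⟨g, k, hg, hk, hgk⟩ := hG
      by_cases hg2 : g = (clG Q₁)⁻¹
      · exact ⟨k, hk, fun hk2 => hgk (hg2.trans hk2.symm)⟩
      · exact ⟨g, hg, hg2⟩
    obtain ⟨Q₃, p3, c3, e3⟩ := h.cls k
    obtain ⟨Q₄, p4, c4, e4⟩ := h.cls (clG Q₁ * k)⁻¹
    obtain ⟨P, pp, cp, ep⟩ := h.cls 1
    have h3 : RP O Q₃ := ⟨p3, c3⟩
    have h4 : RP O Q₄ := ⟨p4, c4⟩
    obtain ⟨S₃, s3, i3, o3, -⟩ := h.S3 h3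
    obtain ⟨S₄, s4, i4, o4, -⟩ := h.S3 h4
    have n3 : clG Q₃ ≠ 1 := by rwa [e3]
    have n4 : clG Q₄ ≠ 1 := by
      rw [e4, ne_eq, inv_eq_one]
      intro h5
      exact k2 (eq_inv_of_mul_eq_one_right h5)
    have A := h.S4 h1 h3 h4 n1 n3 n4 (by rw [e3, e4]; simp)
    have B := h.S4 h2 s3 s4 n2 (by simpa [i3] using n3) (by simpa [i4] using n4) (by
      rw [i3, i4, e3, e4, inv_inv, ← n12]; rw [show clG Q₂ * k⁻¹ * (clG Q₁ * k) = clG Q₁ * clG Q₂ * (k * k⁻¹) by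
        rw [mul_comm (clG Q₁) k, mul_assoc, inv_mul_cancel_left, mul_inv_cancel, mul_one, mul_comm]]; simp)
    have C := (o3.mul o4).mul (h.S1 pp ep)
    refine ⟨P, ⟨pp, cp⟩, ?_⟩
    refine OP.mul ?_ (h.S1 pp ep)
    refine h.OP_cancel (A := (Q₃ * S₃) * (Q₄ * S₄)) ?_ ?_ (o3.mul o4) ?_
    · exact mul_ne_zero (mul_ne_zero p3.ne_zero s3.1.ne_zero)
        (mul_ne_zero p4.ne_zero s4.1.ne_zero)
    · exact IsCoprime.mul_left (IsCoprime.mul_left c3 s3.2) (IsCoprime.mul_left c4 s4.2)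
    · have := A.mul B
      rwa [show Q₁ * Q₃ * Q₄ * (Q₂ * S₃ * S₄) = Q₃ * S₃ * (Q₄ * S₄) * (Q₁ * Q₂) by ring] at this
  · obtain ⟨Q₃, p3, c3, e3⟩ := h.cls (clG Q₁ * clG Q₂)⁻¹
    exact ⟨Q₃, ⟨p3, c3⟩, h.S4 h1 h2 ⟨p3, c3⟩ n1 n2 (by rw [e3, ne_eq, inv_eq_one]; exact n12) (by rw [e3]; simp)⟩

lemma S6 (h : SU O r t) (hG : ∃ g k : ClassGroup R, g ≠ 1 ∧ k ≠ 1 ∧ g ≠ k)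
    (m : Multiset (Ideal R)) (hm : ∀ Q ∈ m, RP O Q) : ∃ Q, RP O Q ∧ OP O (m.prod * Q) := by
  induction m using Multiset.induction_on with
  | empty =>
    obtain ⟨P, pp, cp, ep⟩ := h.cls 1
    exact ⟨P, ⟨pp, cp⟩, by simpa using h.S1 pp ep⟩
  | cons Q₁ m ih =>
    obtain ⟨Q', q1, q2⟩ := ih (fun Q hQ => hm Q (Multiset.mem_cons_of_mem hQ))
    obtain ⟨S, s1, -, s2, -⟩ := h.S3 q1
    obtain ⟨T, t1, t2⟩ := h.S5 hG (hm Q₁ (Multiset.mem_cons_self _ _)) s1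
    refine ⟨T, t1, ?_⟩
    refine h.OP_cancel (mul_ne_zero q1.1.ne_zero s1.1.ne_zero) (IsCoprime.mul_left q1.2 s1.2) s2 ?_
    have := q2.mul t2
    rwa [show m.prod * Q' * (Q₁ * S * T) = Q' * S * (((Q₁ ::ₘ m).prod) * T) by
      rw [Multiset.prod_cons]; ring] at this

lemma RP_of_mem_fac {x : R} (hx : x ≠ 0) (hc : IsCoprime (Ideal.span {x}) O.conductor)
    {Q : Ideal R} (hQ : Q ∈ fac x) : RP O Q := by
  obtain ⟨h1, h2⟩ := (mem_fac hx).mp hQ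
  refine ⟨h1, ?_⟩
  rw [Ideal.isCoprime_iff_sup_eq] at hc ⊢
  rw [eq_top_iff, ← hc]
  exact sup_le_sup_right ((Ideal.span_singleton_le_iff_mem _).mpr h2) _

lemma LN1 (h : SU O r t) (hG : ∃ g k : ClassGroup R, g ≠ 1 ∧ k ≠ 1 ∧ g ≠ k)
    (x : R) (hx : x ≠ 0) (hc : IsCoprime (Ideal.span {x}) O.conductor) :
    OP O (Ideal.span {x}) := by
  obtain ⟨Q, hQ, hO⟩ := h.S6 hG (fac x) (fun Q hQ => RP_of_mem_fac hx hc hQ)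
  rw [fac_prod hx] at hO
  have hcl : clG Q = 1 := by
    obtain ⟨a, -, ha⟩ := hO
    have hne := mul_ne_zero (span_ne_bot hx) hQ.1.ne_zero
    have := (clG_eq_one_iff hne).mpr ⟨a, ha⟩
    rwa [clG_mul (span_ne_bot hx) hQ.1.ne_zero, clG_span hx, one_mul] at this
  refine h.OP_cancel hQ.1.ne_zero hQ.2 (h.S1 hQ.1 hcl) ?_
  rwa [mul_comm]

end SU
end PartF

open scoped nonZeroDivisors

section PartG
open UniqueFactorizationMonoid
variable {R : Type*} [CommRing R] [IsDedekindDomain R]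

namespace SU
variable {O : Subring R} {r : R → R → Prop} {t : ℕ}

lemma exists_one_sub {A : Ideal R} (hc : IsCoprime A O.conductor) :
    ∃ e ∈ O.conductor, 1 - e ∈ A := by
  obtain ⟨i, hi, j, hj, hij⟩ := Ideal.isCoprime_iff_exists.mp hc
  exact ⟨j, hj, by rw [← hij]; simpa using hi⟩

lemma map_comap_reg {A : Ideal R} (hc : IsCoprime A O.conductor) :
    Ideal.map O.subtype (Ideal.comap O.subtype A) = A := by
  apply le_antisymm Ideal.map_comap_le
  intro x hx
  obtain ⟨e, he, hi⟩ := exists_one_sub hc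
  have heO : e ∈ O := mem_of_conductor he
  have h1 : x * (1 - e) ∈ Ideal.map O.subtype (Ideal.comap O.subtype A) := by
    apply Ideal.mul_mem_left
    exact Ideal.mem_map_of_mem O.subtype (I := Ideal.comap O.subtype A)
      (x := ⟨1 - e, O.sub_mem O.one_mem heO⟩) (by rw [Ideal.mem_comap]; exact hi)
  have h2 : x * e ∈ Ideal.map O.subtype (Ideal.comap O.subtype A) := by
    have hO : x * e ∈ O := by rw [mul_comm]; exact he x
    exact Ideal.mem_map_of_mem O.subtype (I := Ideal.comap O.subtype A)
      (x := ⟨x * e, hO⟩) (by rw [Ideal.mem_comap]; exact A.mul_mem_right e hx)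
  have := Ideal.add_mem _ h1 h2
  rwa [show x * (1 - e) + x * e = x by ring] at this

lemma comap_mul (h : SU O r t) {A B : Ideal R} (hA : IsCoprime A O.conductor)
    (hB : IsCoprime B O.conductor) (a : O) (ha : Ideal.span {(a : R)} = A * B) :
    Ideal.comap O.subtype A * Ideal.comap O.subtype B = Ideal.span {a} := by
  apply le_antisymm
  · rw [Ideal.mul_le]
    intro x hx y hy
    rw [Ideal.mem_comap] at hx hy
    have hxy : (x : R) * (y : R) ∈ Ideal.span {(a : R)} := by
      rw [ha]; exact Ideal.mul_mem_mul hx hy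
    obtain ⟨b, hb⟩ := Ideal.mem_span_singleton.mp hxy
    have hbO : b ∈ O := h.cancelO a.2 (by rw [ha]; exact IsCoprime.mul_left hA hB)
      (by rw [← hb]; exact O.mul_mem x.2 y.2)
    rw [Ideal.mem_span_singleton]
    exact ⟨⟨b, hbO⟩, Subtype.ext hb⟩
  · rw [Ideal.span_singleton_le_iff_mem]
    obtain ⟨c, hc, hi⟩ := exists_one_sub hA
    obtain ⟨c', hc', hi'⟩ := exists_one_sub hB
    have hcO := mem_of_conductor hc
    have hc'O := mem_of_conductor hc'
    set e : R := c + c' - c * c' with he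
    have hef : e ∈ O.conductor :=
      Ideal.sub_mem _ (Ideal.add_mem _ hc hc') (Ideal.mul_mem_right _ _ hc)
    have heO := mem_of_conductor hef
    have key : ∀ z ∈ A * B, ∃ o ∈ Ideal.comap O.subtype A * Ideal.comap O.subtype B,
        (o : R) = z * e * e := by
      intro z hz
      refine Submodule.mul_induction_on hz ?_ ?_
      · intro x hx y hy
        have hx' : x * e ∈ O := by rw [mul_comm]; exact hef x
        have hy' : y * e ∈ O := by rw [mul_comm]; exact hef y
        refine ⟨⟨x * e, hx'⟩ * ⟨y * e, hy'⟩, Ideal.mul_mem_mul ?_ ?_, ?_⟩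
        · rw [Ideal.mem_comap]; exact A.mul_mem_right e hx
        · rw [Ideal.mem_comap]; exact B.mul_mem_right e hy
        · simp only [Subring.coe_mul]; ring
      · rintro x y ⟨o, ho, hx⟩ ⟨o', ho', hy⟩
        exact ⟨o + o', Ideal.add_mem _ ho ho', by rw [Subring.coe_add, hx, hy]; ring⟩
    obtain ⟨o, ho, hoe⟩ := key a (by rw [← ha]; exact Ideal.mem_span_singleton_self _)
    let i : O := ⟨1 - c, O.sub_mem O.one_mem hcO⟩
    let i' : O := ⟨1 - c', O.sub_mem O.one_mem hc'O⟩
    let E : O := ⟨e, heO⟩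
    have h1 : i * i' ∈ Ideal.comap O.subtype A * Ideal.comap O.subtype B :=
      Ideal.mul_mem_mul hi hi'
    have : a = (a * (i * i' + (E + E))) * (i * i') + o := by
      apply Subtype.ext
      push_cast
      rw [hoe]
      simp only [i, i', E, he]
      ring
    rw [this]
    exact Ideal.add_mem _ (Ideal.mul_mem_left _ _ h1) ho

lemma exists_cofactor (h : SU O r t) {A : Ideal R} (hA0 : A ≠ 0) (hA : IsCoprime A O.conductor) :
    ∃ B : Ideal R, B ≠ 0 ∧ IsCoprime B O.conductor ∧ ∃ a ∈ O, a ≠ 0 ∧ Ideal.span {a} = A * B := by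
  obtain ⟨n, hn, x, hx⟩ := exists_pow_principal h.tor A hA0
  have hp : 0 < n * t := Nat.mul_pos hn h.tpos
  have hs : Ideal.span {x ^ t} = A * A ^ (n * t - 1) := by
    rw [← Ideal.span_singleton_pow, hx, ← pow_mul, ← pow_succ']
    congr 1; omega
  exact ⟨A ^ (n * t - 1), pow_ne_zero _ hA0, IsCoprime.pow_left hA, x ^ t, h.powO x,
    pow_ne_zero _ (ne_zero_of_span (pow_ne_zero _ hA0) hx), hs⟩

lemma exists_unit_frac (h : SU O r t) {A : Ideal R} (hA0 : A ≠ 0)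
    (hA : IsCoprime A O.conductor) :
    ∃ I : (FractionalIdeal O⁰ (FractionRing O))ˣ,
      (I : FractionalIdeal O⁰ (FractionRing O)) = (Ideal.comap O.subtype A : Ideal O) := by
  obtain ⟨B, hB0, hB, a, haO, ha0, ha⟩ := h.exists_cofactor hA0 hA
  have h1 := h.comap_mul hA hB ⟨a, haO⟩ ha
  have h2 : (Ideal.comap O.subtype A : FractionalIdeal O⁰ (FractionRing O)) *
      (Ideal.comap O.subtype B : FractionalIdeal O⁰ (FractionRing O)) =
      FractionalIdeal.spanSingleton O⁰ (algebraMap O (FractionRing O) ⟨a, haO⟩) := by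
    rw [← FractionalIdeal.coeIdeal_mul, h1, FractionalIdeal.coeIdeal_span_singleton]
  have hne : algebraMap O (FractionRing O) ⟨a, haO⟩ ≠ 0 := by
    rw [ne_eq, map_eq_zero_iff _ (IsFractionRing.injective O (FractionRing O))]
    intro h0
    exact ha0 (congrArg Subtype.val h0)
  have h3 : IsUnit (FractionalIdeal.spanSingleton O⁰ (algebraMap O (FractionRing O) ⟨a, haO⟩)) := by
    have := (toPrincipalIdeal O (FractionRing O) (Units.mk0 _ hne)).isUnit
    rwa [coe_toPrincipalIdeal] at this
  rw [← h2] at h3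
  obtain ⟨I, hI⟩ := isUnit_of_mul_isUnit_left h3
  exact ⟨I, hI⟩

lemma LN2 (h : SU O r t) (hpic : Nonempty (ClassGroup ↥O ≃* ClassGroup R))
    (hG : ∀ g k : ClassGroup R, g ≠ 1 → k ≠ 1 → g = k)
    (x : R) (hx : x ≠ 0) (hc : IsCoprime (Ideal.span {x}) O.conductor) :
    OP O (Ideal.span {x}) := by
  obtain ⟨ψ⟩ := hpic
  have hG' : ∀ g k : ClassGroup O, g ≠ 1 → k ≠ 1 → g = k := fun g k hg hk =>
    ψ.injective (hG _ _ (by simpa using hg) (by simpa using hk))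
  obtain ⟨I, hI⟩ := h.exists_unit_frac (span_ne_bot hx) hc
  by_cases h1 : ClassGroup.mk (FractionRing O) I = 1
  · obtain ⟨y, hy, hIy⟩ := (ClassGroup.mk_eq_one_of_coe_ideal hI).mp h1
    refine ⟨y, y.2, ?_⟩
    rw [← map_comap_reg hc, hIy, Ideal.map_span, Set.image_singleton]
    rfl
  · exfalso
    obtain ⟨Q, hQ, hQc, hQe⟩ := h.cls (ψ (ClassGroup.mk (FractionRing O) I))
    have hQ1 : clG Q ≠ 1 := by rw [hQe]; simpa using h1
    obtain ⟨J, hJ⟩ := h.exists_unit_frac hQ.ne_zero hQc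
    have hJ1 : ClassGroup.mk (FractionRing O) J ≠ 1 := by
      intro h2
      obtain ⟨y, hy, hIy⟩ := (ClassGroup.mk_eq_one_of_coe_ideal hJ).mp h2
      apply hQ1
      rw [clG_eq_one_iff hQ.ne_zero]
      refine ⟨y, ?_⟩
      rw [← map_comap_reg hQc, hIy, Ideal.map_span, Set.image_singleton]
      rfl
    obtain ⟨a, b, ha, hb, hab⟩ := (ClassGroup.mk_eq_mk_of_coe_ideal hI hJ).mp (hG' _ _ h1 hJ1)
    have h3 := congrArg (Ideal.map O.subtype) hab
    rw [Ideal.map_mul, Ideal.map_mul, map_comap_reg hc, map_comap_reg hQc, Ideal.map_span,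
      Ideal.map_span, Set.image_singleton, Set.image_singleton,
      Ideal.span_singleton_mul_span_singleton] at h3
    have ha' : (a : R) ≠ 0 := fun h0 => ha (Subtype.ext h0)
    have hb' : (b : R) ≠ 0 := fun h0 => hb (Subtype.ext h0)
    have h4 : clG (Ideal.span {(a : R) * x}) = clG (Ideal.span {(b : R)} * Q) := congrArg clG h3
    rw [clG_span (mul_ne_zero ha' hx), clG_mul (span_ne_bot hb') hQ.ne_zero] at h4
    rw [clG_span hb', one_mul] at h4
    exact hQ1 h4.symm

lemma LN (h : SU O r t) (hpic : Nonempty (ClassGroup ↥O ≃* ClassGroup R))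
    (x : R) (hx : x ≠ 0) (hc : IsCoprime (Ideal.span {x}) O.conductor) :
    OP O (Ideal.span {x}) := by
  by_cases hG : ∃ g k : ClassGroup R, g ≠ 1 ∧ k ≠ 1 ∧ g ≠ k
  · exact h.LN1 hG x hx hc
  · push Not at hG
    exact h.LN2 hpic hG x hx hc

/-- Comparison lemma. -/
lemma compare (h : SU O r t) (hpic : Nonempty (ClassGroup ↥O ≃* ClassGroup R))
    {X A B : Ideal R} {a b : R} (hA : IsCoprime A O.conductor) (hB : IsCoprime B O.conductor)
    (haO : a ∈ O) (ha0 : a ≠ 0) (hb0 : b ≠ 0) (ha : Ideal.span {a} = X * A)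
    (hb : Ideal.span {b} = X * B) :
    ∃ ε : Rˣ, (ε : R) * b ∈ O ∧ ∃ γ ∈ O, ∃ δ ∈ O, IsCoprime (Ideal.span {γ}) O.conductor ∧
      IsCoprime (Ideal.span {δ}) O.conductor ∧ a * δ = ε * b * γ := by
  have hX0 : X ≠ 0 := by
    rintro rfl
    rw [zero_mul] at ha
    exact span_ne_bot ha0 ha
  have hA0 : A ≠ 0 := by
    rintro rfl
    rw [mul_zero] at ha
    exact span_ne_bot ha0 ha
  have hB0 : B ≠ 0 := by
    rintro rfl
    rw [mul_zero] at hb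
    exact span_ne_bot hb0 hb
  obtain ⟨C, hC0, hC, γ, hγO, hγ0, hγ⟩ := h.exists_cofactor hA0 hA
  have hBC : IsCoprime (B * C) O.conductor := IsCoprime.mul_left hB hC
  have e1 : Ideal.span {b * γ} = Ideal.span {a} * (B * C) := by
    rw [← Ideal.span_singleton_mul_span_singleton, ha, hb, hγ]; ring
  have hdvd : a ∣ b * γ := by
    have : Ideal.span {b * γ} ≤ Ideal.span {a} := e1 ▸
      (Ideal.mul_le_left : Ideal.span {a} * (B * C) ≤ Ideal.span {a})
    exact (Ideal.span_singleton_le_span_singleton).mp this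
  obtain ⟨δ', hδ'⟩ := hdvd
  have e2 : Ideal.span {δ'} = B * C := by
    rw [hδ', ← Ideal.span_singleton_mul_span_singleton] at e1
    exact mul_left_cancel₀ (span_ne_bot ha0) e1
  have hδ'0 := ne_zero_of_span (mul_ne_zero hB0 hC0) e2
  obtain ⟨δ, hδO, hδ⟩ := h.LN hpic δ' hδ'0 (by rw [e2]; exact hBC)
  obtain ⟨ε, hε⟩ := Ideal.span_singleton_eq_span_singleton.mp hδ.symm
  have hγc : IsCoprime (Ideal.span {γ}) O.conductor := by
    rw [hγ]; exact IsCoprime.mul_left hA hC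
  have e3 : a * δ = ε * b * γ := by
    rw [← hε]; linear_combination (-(ε : R)) * hδ'
  refine ⟨ε, ?_, γ, hγO, δ, hδO, hγc, by rw [hδ, e2]; exact hBC, e3⟩
  apply h.cancelO hγO hγc
  rw [mul_comm, ← e3]
  exact O.mul_mem haO hδO

end SU
end PartG

open scoped nonZeroDivisors

section PartH
open UniqueFactorizationMonoid
variable {R : Type*} [CommRing R] [IsDedekindDomain R]

open Classical in
/-- prime factors dividing the conductor. -/
noncomputable def fs (O : Subring R) (a : R) : Multiset (Ideal R) :=
  (fac a).filter (fun Q => O.conductor ≤ Q)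

lemma fs_mul (O : Subring R) {a b : R} (ha : a ≠ 0) (hb : b ≠ 0) :
    fs O (a * b) = fs O a + fs O b := by
  unfold fs; rw [fac_mul ha hb, Multiset.filter_add]

lemma fs_unit (O : Subring R) {a : R} (ha : IsUnit a) : fs O a = 0 := by
  unfold fs; rw [fac_unit ha]; rfl

lemma fs_pow (O : Subring R) (a : R) (n : ℕ) : fs O (a ^ n) = n • fs O a := by
  unfold fs; rw [fac_pow, Multiset.filter_nsmul]

lemma fs_list (O : Subring R) (l : List R) (h : ∀ x ∈ l, x ≠ 0) :
    fs O l.prod = (l.map (fs O)).sum := by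
  induction l with
  | nil => simpa using fs_unit O isUnit_one
  | cons x l ih =>
    have h1 : l.prod ≠ 0 := List.prod_ne_zero (fun h0 => h 0 (List.mem_cons_of_mem _ h0) rfl)
    rw [List.prod_cons, fs_mul O (h x (by simp)) h1, ih (fun y hy => h y (by simp [hy]))]
    simp

lemma fs_reg (O : Subring R) {a : R} (ha : a ≠ 0) (hc : IsCoprime (Ideal.span {a}) O.conductor) :
    fs O a = 0 := by
  classical
  unfold fs
  rw [Multiset.filter_eq_nil]
  intro Q hQ hle
  have := SU.RP_of_mem_fac ha hc hQ
  exact not_le_of_coprime this.1 this.2 hle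

lemma reg_prod (O : Subring R) (m : Multiset (Ideal R))
    (h : ∀ Q ∈ m, Prime Q ∧ ¬ O.conductor ≤ Q) : IsCoprime m.prod O.conductor := by
  induction m using Multiset.induction_on with
  | empty => rw [Multiset.prod_zero]; exact isCoprime_one_left
  | cons Q m ih =>
    rw [Multiset.prod_cons]
    refine IsCoprime.mul_left ?_ (ih (fun X hX => h X (Multiset.mem_cons_of_mem hX)))
    have := h Q (Multiset.mem_cons_self _ _)
    exact coprime_of_prime this.1 this.2

lemma fs_split (O : Subring R) {a : R} (ha : a ≠ 0) :
    ∃ A, IsCoprime A O.conductor ∧ Ideal.span {a} = (fs O a).prod * A := by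
  classical
  refine ⟨((fac a).filter (fun Q => ¬ O.conductor ≤ Q)).prod, ?_, ?_⟩
  · apply reg_prod
    intro Q hQ
    rw [Multiset.mem_filter] at hQ
    exact ⟨fac_prime hQ.1, hQ.2⟩
  · rw [← Multiset.prod_add]
    unfold fs
    rw [Multiset.filter_add_not, fac_prod ha]

lemma iv_mul (P : Ideal R) {a b : R} (ha : a ≠ 0) (hb : b ≠ 0) :
    idealVal P (a * b) = idealVal P a + idealVal P b := by
  classical
  rw [idealVal_eq, idealVal_eq, idealVal_eq, fac_mul ha hb, Multiset.count_add]

lemma iv_zero {P : Ideal R} (hP : Prime P) {a : R} (ha : a ≠ 0) :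
    idealVal P a = 0 ↔ a ∉ P := by
  classical
  rw [idealVal_eq, Multiset.count_eq_zero, mem_fac ha]
  tauto

lemma mem_pow_iff {P : Ideal R} (hP : Prime P) {a : R} (ha : a ≠ 0) (j : ℕ) :
    a ∈ P ^ j ↔ j ≤ idealVal P a := by
  classical
  rw [idealVal_eq, Multiset.le_count_iff_replicate_le, ← Ideal.dvd_span_singleton,
    dvd_iff_normalizedFactors_le_normalizedFactors (pow_ne_zero _ hP.ne_zero) (span_ne_bot ha),
    normalizedFactors_pow, normalizedFactors_irreducible hP.irreducible, normalize_eq,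
    Multiset.nsmul_singleton]
  rfl

lemma fs_eq (O : Subring R) {P : Ideal R} (hPf : O.conductor ≤ P) {x : R}
    (h : ∀ Q ∈ fac x, O.conductor ≤ Q → Q = P) :
    fs O x = Multiset.replicate (idealVal P x) P := by
  classical
  unfold fs
  rw [idealVal_eq, ← Multiset.filter_eq']
  apply Multiset.filter_congr
  intro Q hQ
  constructor
  · exact h Q hQ
  · rintro rfl; exact hPf

lemma iv_of_fs (O : Subring R) {P : Ideal R} (hPf : O.conductor ≤ P) {x : R} {m : ℕ}
    (h : fs O x = Multiset.replicate m P) : idealVal P x = m := by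
  classical
  rw [idealVal_eq]
  have : Multiset.count P (fs O x) = Multiset.count P (fac x) := by
    unfold fs
    rw [Multiset.count_filter_of_pos hPf]
  rw [← this, h, Multiset.count_replicate_self]

lemma fs_of_fac_cons (O : Subring R) {x : R} {m n : Multiset (Ideal R)} (h : fac x = m + n)
    (hm : ∀ Q ∈ m, O.conductor ≤ Q) (hn : ∀ Q ∈ n, ¬ O.conductor ≤ Q) : fs O x = m := by
  classical
  unfold fs
  rw [h, Multiset.filter_add, Multiset.filter_eq_self.mpr hm, Multiset.filter_eq_nil.mpr hn,
    add_zero]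

namespace SU
variable {O : Subring R} {r : R → R → Prop} {t : ℕ}

lemma compare' (h : SU O r t) (hpic : Nonempty (ClassGroup ↥O ≃* ClassGroup R))
    {a b : R} (haO : a ∈ O) (ha0 : a ≠ 0) (hb0 : b ≠ 0) (hab : fs O a = fs O b) :
    ∃ ε : Rˣ, (ε : R) * b ∈ O ∧ ∃ γ ∈ O, ∃ δ ∈ O, IsCoprime (Ideal.span {γ}) O.conductor ∧
      IsCoprime (Ideal.span {δ}) O.conductor ∧ a * δ = ε * b * γ := by
  obtain ⟨A, hA, h1⟩ := fs_split O ha0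
  obtain ⟨B, hB, h2⟩ := fs_split O hb0
  rw [← hab] at h2
  exact h.compare hpic hA hB haO ha0 hb0 h1 h2

/-- allowed valuations -/
def okv (P : Ideal R) (j : ℕ) : Prop := j = 1 ∨ (clG P ≠ 1 ∧ clG P ^ 2 = 1 ∧ j ≤ 2)

lemma exists_rho (h : SU O r t) {P : Ideal R} (hP : Prime P) (hPf : O.conductor ≤ P) :
    ∃ ρ : R, ρ ≠ 0 ∧ ¬ IsUnit ρ ∧ fs O ρ = {P} ∧ ∀ l : List R,
      (∀ w ∈ l, w ≠ 0 ∧ ¬ IsUnit w ∧ r w ρ) → (l.map fac).sum = l.length • fac ρ →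
      ∀ w ∈ l, ∃ j, okv P j ∧ fs O w = Multiset.replicate j P := by
  by_cases h1 : clG P = 1
  · obtain ⟨ρ, hρ⟩ := (clG_eq_one_iff hP.ne_zero).mp h1
    have hf : fac ρ = {P} := fac_of_span _ (by simpa using hP) (by simpa using hρ)
    have hsub : ∀ Q ∈ ({P} : Multiset (Ideal R)), O.conductor ≤ Q := by
      intro Q hQ; rw [Multiset.mem_singleton] at hQ; rwa [hQ]
    refine ⟨ρ, ne_zero_of_span hP.ne_zero hρ, not_unit_of_fac (by rw [hf]; simp),
      fs_of_fac_cons O (m := {P}) (n := 0) (by rw [hf, add_zero]) hsub (by simp), ?_⟩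
    intro l hl hsum w hw
    have hc : (fac w).card = 1 := sum_tight Multiset.cardHom 1 l
      (fun w hw => one_le_card (hl w hw).1 (hl w hw).2.1) (by rw [hsum, hf]; simp) w hw
    obtain ⟨X, hX⟩ := Multiset.card_eq_one.mp hc
    have hXP : X ∈ l.length • fac ρ := by
      rw [← hsum]
      exact Multiset.mem_of_le (le_sum_fac l w hw) (by rw [hX]; simp)
    have hXP := Multiset.mem_of_mem_nsmul hXP
    rw [hf, Multiset.mem_singleton] at hXP
    subst hXP
    exact ⟨1, Or.inl rfl, by
      rw [Multiset.replicate_one]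
      exact fs_of_fac_cons O (m := {X}) (n := 0) (by rw [hX, add_zero]) hsub (by simp)⟩
  · obtain ⟨Q, hQ, hQc, hQe⟩ := h.cls (clG P)⁻¹
    have hQf := not_le_of_coprime hQ hQc
    have hne : P ≠ Q := by rintro rfl; exact hQf hPf
    have h0 := mul_ne_zero hP.ne_zero hQ.ne_zero
    obtain ⟨ρ, hρ⟩ := (clG_eq_one_iff h0).mp (by
      rw [clG_mul hP.ne_zero hQ.ne_zero, hQe]; simp)
    have hf := fac_two hP hQ hρ
    have hsub : ∀ j, ∀ X ∈ Multiset.replicate j P, O.conductor ≤ X := by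
      intro j X hX; rw [Multiset.eq_of_mem_replicate hX]; exact hPf
    have hsub' : ∀ j, ∀ X ∈ Multiset.replicate j Q, ¬ O.conductor ≤ X := by
      intro j X hX; rw [Multiset.eq_of_mem_replicate hX]; exact hQf
    refine ⟨ρ, ne_zero_of_span h0 hρ, not_unit_of_fac (by rw [hf]; simp),
      fs_of_fac_cons O (m := Multiset.replicate 1 P) (n := Multiset.replicate 1 Q)
        (by rw [hf]; rfl) (hsub 1) (hsub' 1), ?_⟩
    intro l hl hsum w hw
    rcases h.pair hP hQ hne hρ h1 (hl w hw).1 (hl w hw).2.2 (fun X hX => by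
      have hXP : X ∈ l.length • fac ρ := by
        rw [← hsum]
        exact Multiset.mem_of_le (le_sum_fac l w hw) hX
      have hXP := Multiset.mem_of_mem_nsmul hXP
      rw [hf] at hXP
      simpa using hXP) with h2 | ⟨h2, h3 | h3⟩
    · exact ⟨1, Or.inl rfl, fs_of_fac_cons O (m := Multiset.replicate 1 P)
        (n := Multiset.replicate 1 Q) (by rw [h2]; rfl) (hsub 1) (hsub' 1)⟩
    · exact ⟨2, Or.inr ⟨h1, h2, le_rfl⟩, fs_of_fac_cons O (m := Multiset.replicate 2 P)
        (n := Multiset.replicate 0 Q) (by rw [h3]; rfl) (hsub 2) (hsub' 0)⟩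
    · exact ⟨0, Or.inr ⟨h1, h2, by norm_num⟩, fs_of_fac_cons O (m := Multiset.replicate 0 P)
        (n := Multiset.replicate 2 Q) (by rw [h3]; rfl) (hsub 0) (hsub' 2)⟩

lemma key (h : SU O r t) (hpic : Nonempty (ClassGroup ↥O ≃* ClassGroup R))
    {P : Ideal R} (hP : Prime P) (hPf : O.conductor ≤ P) {a : R} (haO : a ∈ O) (ha0 : a ≠ 0)
    {m : ℕ} (ha : fs O a = Multiset.replicate m P) :
    ∃ l : List R, (∀ w ∈ l, w ∈ O ∧ w ≠ 0 ∧ ∃ j, okv P j ∧ fs O w = Multiset.replicate j P) ∧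
      ∃ x ∈ O, ∃ y ∈ O, x ≠ 0 ∧ y ≠ 0 ∧ fs O x = 0 ∧ fs O y = 0 ∧ a * x = l.prod * y := by
  obtain ⟨ρ, hρ0, hρu, hρf, hρl⟩ := h.exists_rho hP hPf
  have hb0 : ρ ^ m ≠ 0 := pow_ne_zero _ hρ0
  obtain ⟨ε, hεO, γ, hγO, δ, hδO, hγ, hδ, e⟩ := h.compare' hpic haO ha0 hb0 (by
    rw [ha, fs_pow, hρf, Multiset.nsmul_singleton])
  have hε0 : (ε : R) * ρ ^ m ≠ 0 := mul_ne_zero ε.ne_zero hb0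
  have has : Associated ((ε : R) * ρ ^ m) (ρ ^ m) := associated_unit_mul_left _ _ ε.isUnit
  obtain ⟨l, l1, l2, l3, u, hu, huO, hul⟩ := h.lift hεO hε0 (List.replicate m ρ)
    (fun y hy => by rw [List.eq_of_mem_replicate hy]; exact ⟨hρ0, hρu⟩)
    (by rw [List.prod_replicate]; exact h.assoc has)
  rw [List.length_replicate] at l1
  have hδγ : δ ≠ 0 ∧ γ ≠ 0 := by
    constructor
    · rintro rfl
      rw [mul_zero] at e
      have hγ0 : γ = 0 := by
        rcases mul_eq_zero.mp e.symm with h5 | h5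
        · exact absurd h5 hε0
        · exact h5
      rw [Ideal.isCoprime_iff_sup_eq] at hδ
      simp only [Set.singleton_zero, Ideal.span_zero, bot_sup_eq] at hδ
      exact (Ideal.isPrime_of_prime hP).ne_top (top_le_iff.mp (hδ ▸ hPf))
    · rintro rfl
      rw [Ideal.isCoprime_iff_sup_eq] at hγ
      simp only [Set.singleton_zero, Ideal.span_zero, bot_sup_eq] at hγ
      exact (Ideal.isPrime_of_prime hP).ne_top (top_le_iff.mp (hγ ▸ hPf))
  have hlr : ∀ w ∈ l, w ≠ 0 ∧ ¬ IsUnit w ∧ r w ρ := by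
    intro w hw
    obtain ⟨-, b, c, y, hy, d⟩ := l2 w hw
    rw [List.eq_of_mem_replicate hy] at d
    exact ⟨b, c, d⟩
  refine ⟨l, fun w hw => ⟨(l2 w hw).1, (l2 w hw).2.1, hρl l hlr ?_ w hw⟩, δ, hδO, u * γ,
    O.mul_mem huO hγO, hδγ.1, mul_ne_zero hu.ne_zero hδγ.2, fs_reg O hδγ.1 hδ, ?_, ?_⟩
  · rw [← l3, fac_assoc has, fac_pow, l1]
  · rw [fs_mul O hu.ne_zero hδγ.2, fs_unit O hu, fs_reg O hδγ.2 hγ, add_zero]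
  · rw [e, hul]; ring

lemma exists_decomp (h : SU O r t) {P : Ideal R} (hP : Prime P) (hPf : O.conductor ≤ P) :
    ∃ (k : ℕ) (g : Ideal R), O.conductor = P ^ k * g ∧ ¬ g ≤ P := by
  obtain ⟨k, g, h1, h2⟩ := WfDvdMonoid.max_power_factor h.f0 hP.irreducible
  exact ⟨k, g, h2, fun h3 => h1 (Ideal.dvd_iff_le.mpr h3)⟩

lemma le_of_other {P Q g : Ideal R} {k : ℕ} (hP : Prime P) (hQ : Prime Q)
    (hd : O.conductor = P ^ k * g) (hle : O.conductor ≤ Q) (hne : Q ≠ P) : g ≤ Q := by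
  have hQp := Ideal.isPrime_of_prime hQ
  rw [hd, Ideal.IsPrime.mul_le hQp] at hle
  rcases hle with h1 | h1
  · exfalso
    exact hne (eq_of_prime_le hQp (Ideal.isPrime_of_prime hP) hP.ne_zero
      (Ideal.IsPrime.le_of_pow_le h1)).symm
  · exact h1

lemma exists_y (h : SU O r t) {P g : Ideal R} {k : ℕ} (hP : Prime P) (hPf : O.conductor ≤ P)
    (hd : O.conductor = P ^ k * g) (hg : ¬ g ≤ P) :
    ∃ y : R, y ≠ 0 ∧ fs O y = {P} ∧ ∀ T, k ≤ T → y ^ T ∈ O := by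
  have hPp := Ideal.isPrime_of_prime hP
  have hco : IsCoprime (P ^ 2) g := IsCoprime.pow_left (coprime_of_prime hP hg)
  obtain ⟨u, hu, z, hz, huz⟩ := Ideal.isCoprime_iff_exists.mp hco
  obtain ⟨π, hπ, hπ2⟩ : ∃ π ∈ P, π ∉ P ^ 2 := by
    have := Ideal.pow_right_strictAnti P hP.ne_zero hPp.ne_top (show 1 < 2 by norm_num)
    simp only [pow_one] at this
    exact Set.exists_of_ssubset this
  set y := π * z + u with hy
  have hy1 : y - 1 ∈ g := by
    have : y - 1 = (π - 1) * z := by rw [hy]; linear_combination huz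
    rw [this]; exact Ideal.mul_mem_left _ _ hz
  have huP : u ∈ P := Ideal.pow_le_self two_ne_zero hu
  have hyP : y ∈ P := Ideal.add_mem _ (Ideal.mul_mem_right _ _ hπ) huP
  have hyP2 : y ∉ P ^ 2 := by
    intro h2
    apply hπ2
    have : π = y - u + π * u := by rw [hy]; linear_combination (-π) * huz
    rw [this]
    exact Ideal.add_mem _ (Ideal.sub_mem _ h2 hu) (Ideal.mul_mem_left _ _ hu)
  have hy0 : y ≠ 0 := by intro h0; exact hyP2 (by rw [h0]; exact Ideal.zero_mem _)
  refine ⟨y, hy0, ?_, ?_⟩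
  · rw [fs_eq O hPf (x := y)]
    · have : idealVal P y = 1 := by
        have h1 := mem_pow_iff hP hy0 1
        have h2 := mem_pow_iff hP hy0 2
        rw [pow_one] at h1
        have := h1.mp hyP
        have := mt h2.mpr hyP2
        omega
      rw [this, Multiset.replicate_one]
    · intro Q hQ hle
      by_contra hne
      obtain ⟨hQp, hyQ⟩ := (mem_fac hy0).mp hQ
      have hgQ := le_of_other hP hQp hd hle hne
      have : (1 : R) ∈ Q := by
        have := Ideal.sub_mem _ hyQ (hgQ hy1)
        simpa using this
      exact (Ideal.isPrime_of_prime hQp).ne_top ((Ideal.eq_top_iff_one _).mpr this)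
  · intro T hT
    apply h.idemO
    have : y ^ T * y ^ T - y ^ T = y ^ T * (y ^ T - 1) := by ring
    rw [this, hd]
    apply Ideal.mul_mem_mul
    · exact Ideal.pow_le_pow_right hT (Ideal.pow_mem_pow hyP T)
    · obtain ⟨c, hc⟩ := sub_one_dvd_pow_sub_one y T
      rw [hc]
      exact Ideal.mul_mem_right _ _ hy1

lemma exists_one (h : SU O r t) (hpic : Nonempty (ClassGroup ↥O ≃* ClassGroup R))
    {P : Ideal R} (hP : Prime P) (hPf : O.conductor ≤ P) :
    ∃ w ∈ O, w ≠ 0 ∧ fs O w = {P} := by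
  obtain ⟨k, g, hd, hg⟩ := h.exists_decomp hP hPf
  obtain ⟨y, hy0, hyf, hyO⟩ := h.exists_y hP hPf hd hg
  obtain ⟨l, hl, a, ha, b, hb, ha0, hb0, haf, hbf, hab⟩ := h.key hpic hP hPf
    (hyO (2 * k + 1) (by omega)) (pow_ne_zero _ hy0) (m := 2 * k + 1)
    (by rw [fs_pow, hyf, Multiset.nsmul_singleton])
  have hl0 : l.prod ≠ 0 := by
    apply List.prod_ne_zero
    intro h0
    exact (hl 0 h0).2.1 rfl
  have e := congrArg (fs O) hab
  rw [fs_mul O (pow_ne_zero _ hy0) ha0, fs_mul O hl0 hb0, haf, hbf, add_zero, add_zero, fs_pow,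
    hyf, fs_list O l (fun w hw => (hl w hw).2.1)] at e
  by_contra hno
  push Not at hno
  have heven : ∀ l : List R, (∀ w ∈ l, w ∈ O ∧ w ≠ 0 ∧ ∃ j, okv P j ∧ fs O w = Multiset.replicate j P) →
      Even (l.map (fs O)).sum.card := by
    intro l hl
    induction l with
    | nil => simp
    | cons w l ih =>
      rw [List.map_cons, List.sum_cons, Multiset.card_add]
      refine Even.add ?_ (ih (fun x hx => hl x (List.mem_cons_of_mem _ hx)))
      obtain ⟨a, b, j, hj, hf⟩ := hl w (List.mem_cons_self)
      have hj1 : j ≠ 1 := by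
        rintro rfl
        exact hno w a b (by rw [hf, Multiset.replicate_one])
      rw [hf, Multiset.card_replicate]
      rcases hj with hj | ⟨-, -, hj⟩
      · exact absurd hj hj1
      · interval_cases j
        · exact Even.zero
        · exact absurd rfl hj1
        · exact even_two
  have := heven l hl
  rw [← e] at this
  rw [Multiset.nsmul_singleton, Multiset.card_replicate] at this
  exact absurd this (by rw [Nat.not_even_iff_odd]; exact ⟨k, rfl⟩)

lemma exists_fs (h : SU O r t) (hpic : Nonempty (ClassGroup ↥O ≃* ClassGroup R))
    (m : Multiset (Ideal R)) (hm : ∀ Q ∈ m, Prime Q ∧ O.conductor ≤ Q) :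
    ∃ a ∈ O, a ≠ 0 ∧ fs O a = m := by
  induction m using Multiset.induction_on with
  | empty => exact ⟨1, O.one_mem, one_ne_zero, fs_unit O isUnit_one⟩
  | cons Q m ih =>
    obtain ⟨a, h1, h2, h3⟩ := ih (fun X hX => hm X (Multiset.mem_cons_of_mem hX))
    obtain ⟨w, w1, w2, w3⟩ := h.exists_one hpic (hm Q (Multiset.mem_cons_self _ _)).1
      (hm Q (Multiset.mem_cons_self _ _)).2
    exact ⟨w * a, O.mul_mem w1 h1, mul_ne_zero w2 h2, by
      rw [fs_mul O w2 h2, w3, h3, Multiset.singleton_add]⟩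

lemma third (h : SU O r t) (hpic : Nonempty (ClassGroup ↥O ≃* ClassGroup R)) (x : R) :
    ∃ ε : Rˣ, (ε : R) * x ∈ O := by
  classical
  by_cases hx : x = 0
  · exact ⟨1, by rw [hx, mul_zero]; exact O.zero_mem⟩
  obtain ⟨a, a1, a2, a3⟩ := h.exists_fs hpic (fs O x) (by
    intro Q hQ
    unfold fs at hQ
    rw [Multiset.mem_filter] at hQ
    exact ⟨fac_prime hQ.1, hQ.2⟩)
  obtain ⟨ε, hε, -⟩ := h.compare' hpic a1 a2 hx a3
  exact ⟨ε, hε⟩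

end SU
end PartH

open scoped nonZeroDivisors

section PartK
open UniqueFactorizationMonoid
variable {R : Type*} [CommRing R] [IsDedekindDomain R]

lemma loc_unit (O : Subring R) (P : Ideal R) (hq : (Ideal.comap (Subring.subtype O) P).IsPrime)
    (a : O) : IsUnit (algebraMap ↥O
      (@Localization.AtPrime ↥O _ (Ideal.comap (Subring.subtype O) P) hq) a) ↔ (a : R) ∉ P := by
  have := IsLocalization.AtPrime.isUnit_to_map_iff
    (@Localization.AtPrime ↥O _ (Ideal.comap (Subring.subtype O) P) hq)
    (Ideal.comap (Subring.subtype O) P) a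
  rw [this]
  rfl

lemma loc_inj (O : Subring R) (P : Ideal R) (hq : (Ideal.comap (Subring.subtype O) P).IsPrime) :
    Function.Injective (algebraMap ↥O
      (@Localization.AtPrime ↥O _ (Ideal.comap (Subring.subtype O) P) hq)) :=
  IsLocalization.injective (M := (Ideal.comap (Subring.subtype O) P).primeCompl) _
    (Ideal.primeCompl_le_nonZeroDivisors (Ideal.comap (Subring.subtype O) P))

lemma atom_of_one (O : Subring R) {P : Ideal R} (hP : Prime P)
    (hq : (Ideal.comap (Subring.subtype O) P).IsPrime) (w : O) (hw0 : (w : R) ≠ 0)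
    (hw : idealVal P (w : R) = 1) : IsLocalAtom O P hq w := by
  unfold IsLocalAtom
  have hinj := loc_inj O P hq
  have hPp := Ideal.isPrime_of_prime hP
  rw [irreducible_iff]
  constructor
  · rw [loc_unit, ← iv_zero hP hw0, hw]; norm_num
  · intro x y hxy
    obtain ⟨a, s, rfl⟩ := IsLocalization.exists_mk'_eq
      (Ideal.comap (Subring.subtype O) P).primeCompl x
    obtain ⟨b, s', rfl⟩ := IsLocalization.exists_mk'_eq
      (Ideal.comap (Subring.subtype O) P).primeCompl y
    have hs : ((s : O) : R) ∉ P := s.2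
    have hs' : ((s' : O) : R) ∉ P := s'.2
    have e : w * (s * s') = a * b := by
      apply hinj
      rw [map_mul, hxy, map_mul, map_mul, mul_mul_mul_comm, IsLocalization.mk'_spec,
        IsLocalization.mk'_spec]
    have e' : (w : R) * ((s : O) * (s' : O)) = a * b := by
      have := congrArg (Subtype.val) e
      simpa using this
    have hs0 : ((s : O) : R) ≠ 0 := fun h0 => hs (by rw [h0]; exact P.zero_mem)
    have hs0' : ((s' : O) : R) ≠ 0 := fun h0 => hs' (by rw [h0]; exact P.zero_mem)
    have hab0 : (a : R) * b ≠ 0 := e' ▸ mul_ne_zero hw0 (mul_ne_zero hs0 hs0')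
    have ha0 := left_ne_zero_of_mul hab0
    have hb0 := right_ne_zero_of_mul hab0
    have hv := congrArg (idealVal P) e'
    rw [iv_mul P hw0 (mul_ne_zero hs0 hs0'), iv_mul P hs0 hs0', iv_mul P ha0 hb0, hw,
      (iv_zero hP hs0).mpr hs, (iv_zero hP hs0').mpr hs'] at hv
    have hcase : idealVal P (a : R) = 0 ∨ idealVal P (b : R) = 0 := by omega
    rcases hcase with h0 | h0
    · left
      rw [iv_zero hP ha0, ← loc_unit O P hq] at h0
      have h1 := IsLocalization.mk'_spec
        (@Localization.AtPrime ↥O _ (Ideal.comap (Subring.subtype O) P) hq) a s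
      rw [← h1] at h0
      exact isUnit_of_mul_isUnit_left h0
    · right
      rw [iv_zero hP hb0, ← loc_unit O P hq] at h0
      have h1 := IsLocalization.mk'_spec
        (@Localization.AtPrime ↥O _ (Ideal.comap (Subring.subtype O) P) hq) b s'
      rw [← h1] at h0
      exact isUnit_of_mul_isUnit_left h0

lemma atom_list (O : Subring R) {P : Ideal R} (hP : Prime P)
    (hq : (Ideal.comap (Subring.subtype O) P).IsPrime) (l : List O)
    (h : IsLocalAtom O P hq l.prod) :
    ∃ w ∈ l, idealVal P ((l.prod : O) : R) = idealVal P (w : R) := by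
  induction l with
  | nil =>
    unfold IsLocalAtom at h
    rw [List.prod_nil, map_one] at h
    exact absurd h not_irreducible_one
  | cons w l ih =>
    have hne : ((w * l.prod : O) : R) ≠ 0 := by
      intro h0
      have h1 : (w * l.prod : O) = 0 := Subtype.ext h0
      unfold IsLocalAtom at h
      rw [List.prod_cons, h1, map_zero] at h
      exact h.ne_zero rfl
    have hne' : (w : R) * (l.prod : O) ≠ 0 := by simpa using hne
    have hw0 := left_ne_zero_of_mul hne'
    have hl0 := right_ne_zero_of_mul hne'
    have hv : idealVal P (((w :: l).prod : O) : R) =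
        idealVal P (w : R) + idealVal P ((l.prod : O) : R) := by
      rw [List.prod_cons, Subring.coe_mul, iv_mul P hw0 hl0]
    unfold IsLocalAtom at h
    rw [List.prod_cons, map_mul] at h
    rcases h.isUnit_or_isUnit rfl with h1 | h1
    · rw [irreducible_isUnit_mul h1] at h
      obtain ⟨x, hx, hxv⟩ := ih h
      rw [loc_unit, ← iv_zero hP hw0] at h1
      exact ⟨x, List.mem_cons_of_mem _ hx, by rw [hv, h1, zero_add, hxv]⟩
    · rw [loc_unit, ← iv_zero hP hl0] at h1
      exact ⟨w, List.mem_cons_self, by rw [hv, h1, add_zero]⟩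

lemma atom_transfer (O : Subring R) {P : Ideal R}
    (hq : (Ideal.comap (Subring.subtype O) P).IsPrime) {a b x y : O} (hx : (x : R) ∉ P)
    (hy : (y : R) ∉ P) (e : a * x = b * y) (h : IsLocalAtom O P hq a) : IsLocalAtom O P hq b := by
  unfold IsLocalAtom at *
  rw [← irreducible_mul_isUnit ((loc_unit O P hq x).mpr hx), ← map_mul, e, map_mul,
    irreducible_mul_isUnit ((loc_unit O P hq y).mpr hy)] at h
  exact h

namespace SU
variable {O : Subring R} {r : R → R → Prop} {t : ℕ}

/-- modify a local element so that it is a unit at the other primes over the conductor. -/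
lemma modify (h : SU O r t) {P : Ideal R} (hP : Prime P) (hPf : O.conductor ≤ P) {a : R}
    (haO : a ∈ O) (ha0 : a ≠ 0) : ∃ a' ∈ O, a' ≠ 0 ∧
      fs O a' = Multiset.replicate (idealVal P a) P ∧
      ∃ s ∈ O, ∃ c ∈ O, s ∉ P ∧ c ∉ P ∧ a * c = a' * s := by
  classical
  obtain ⟨k, g, hd, hg⟩ := h.exists_decomp hP hPf
  have hPp := Ideal.isPrime_of_prime hP
  set m := idealVal P a with hm
  have h1P : (1 : R) ∉ P := fun h1 => hPp.ne_top ((Ideal.eq_top_iff_one _).mpr h1)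
  obtain ⟨u, hu, z, hz, huz⟩ := Ideal.isCoprime_iff_exists.mp (coprime_of_prime hP hg)
  have hzP : z ∉ P := fun h2 => h1P (huz ▸ Ideal.add_mem _ hu h2)
  have hut : u ^ t ∈ P := Ideal.pow_mem_of_mem _ hu _ h.tpos
  have hvP : 1 - u ^ t ∉ P := fun h2 => h1P (by
    have := Ideal.add_mem _ h2 hut
    simpa using this)
  have hv0 : 1 - u ^ t ≠ 0 := fun h0 => hvP (by rw [h0]; exact P.zero_mem)
  have hu1 : u - 1 ∈ g := by
    have : u - 1 = - z := by linear_combination huz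
    rw [this]; exact neg_mem hz
  have hpow1 : ∀ T, u ^ T - 1 ∈ g := by
    intro T
    obtain ⟨c, hc⟩ := sub_one_dvd_pow_sub_one u T
    rw [hc]; exact Ideal.mul_mem_right _ _ hu1
  set N := t * (m + k + 1) with hN
  have hNle : m + k + 1 ≤ N := Nat.le_mul_of_pos_left _ h.tpos
  have huNO : u ^ N ∈ O := by rw [hN, pow_mul]; exact O.pow_mem (h.powO u) _
  have hvO : 1 - u ^ t ∈ O := O.sub_mem O.one_mem (h.powO u)
  set a' := a * (1 - u ^ t) + u ^ N with ha'
  have hvm : idealVal P (a * (1 - u ^ t)) = m := by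
    rw [iv_mul P ha0 hv0, (iv_zero hP hv0).mpr hvP, add_zero]
  have huN : u ^ N ∈ P ^ (m + 1) :=
    Ideal.pow_le_pow_right (by omega) (Ideal.pow_mem_pow hu N)
  have hin : a' ∈ P ^ m := Ideal.add_mem _
    ((mem_pow_iff hP (mul_ne_zero ha0 hv0) m).mpr hvm.ge)
    (Ideal.pow_le_pow_right (by omega) huN)
  have hnotin : a' ∉ P ^ (m + 1) := by
    intro h2
    have h3 := Ideal.sub_mem _ h2 huN
    rw [ha', add_sub_cancel_right, mem_pow_iff hP (mul_ne_zero ha0 hv0), hvm] at h3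
    omega
  have ha'0 : a' ≠ 0 := fun h0 => hnotin (by rw [h0]; exact Ideal.zero_mem _)
  have hva' : idealVal P a' = m := by
    have h1 := (mem_pow_iff hP ha'0 m).mp hin
    have h2 := mt (mem_pow_iff hP ha'0 (m + 1)).mpr hnotin
    omega
  refine ⟨a', O.add_mem (O.mul_mem haO hvO) huNO, ha'0, ?_, ?_⟩
  · rw [fs_eq O hPf (x := a'), hva']
    intro Q hQ hle
    by_contra hne
    obtain ⟨hQp, haQ⟩ := (mem_fac ha'0).mp hQ
    have hgQ := le_of_other hP hQp hd hle hne
    have h4 : (1 : R) = a' + a * (u ^ t - 1) - (u ^ N - 1) := by rw [ha']; ring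
    have : (1 : R) ∈ Q := by
      rw [h4]
      exact Ideal.sub_mem _ (Ideal.add_mem _ haQ (Ideal.mul_mem_left _ _ (hgQ (hpow1 t))))
        (hgQ (hpow1 N))
    exact (Ideal.isPrime_of_prime hQp).ne_top ((Ideal.eq_top_iff_one _).mpr this)
  · -- the cofactor of `P ^ m` in `(a)`
    obtain ⟨B, hB⟩ := Ideal.dvd_span_singleton.mpr ((mem_pow_iff hP ha0 m).mpr le_rfl)
    have hBP : ¬ B ≤ P := by
      intro hle
      obtain ⟨C, hC⟩ := Ideal.dvd_iff_le.mpr hle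
      have : a ∈ P ^ (m + 1) := by
        rw [← Ideal.dvd_span_singleton]
        exact ⟨C, by rw [hB, hC, pow_succ]; ring⟩
      rw [mem_pow_iff hP ha0] at this
      omega
    obtain ⟨s0, hs0B, hs0P⟩ := Set.not_subset.mp hBP
    have h5 : u ^ m * s0 ∈ Ideal.span {a} := by
      rw [hB]; exact Ideal.mul_mem_mul (Ideal.pow_mem_pow hu m) hs0B
    obtain ⟨b, hb⟩ := Ideal.mem_span_singleton.mp h5
    have hf : u ^ k * z ∈ O.conductor := by
      rw [hd]; exact Ideal.mul_mem_mul (Ideal.pow_mem_pow hu k) hz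
    obtain ⟨t', ht'⟩ := Nat.exists_eq_add_of_le' h.tpos
    obtain ⟨N', hN'⟩ := Nat.exists_eq_add_of_le hNle
    set y' := (u ^ k * z) * (b * u * u ^ N' * (s0 * z) ^ t') with hy'
    have hy'f : y' ∈ O.conductor := Ideal.mul_mem_right _ _ hf
    have hsP : (s0 * z) ^ t ∉ P := fun h2 => by
      rcases hPp.mem_or_mem (hPp.mem_of_pow_mem _ h2) with h3 | h3
      · exact hs0P h3
      · exact hzP h3
    refine ⟨(s0 * z) ^ t, h.powO _, (s0 * z) ^ t * (1 - u ^ t) + y',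
      O.add_mem (O.mul_mem (h.powO _) hvO) (mem_of_conductor hy'f), hsP, ?_, ?_⟩
    · intro h2
      have h3 := Ideal.sub_mem _ h2 (hPf hy'f)
      rw [add_sub_cancel_right] at h3
      rcases hPp.mem_or_mem h3 with h4 | h4
      · exact hsP h4
      · exact hvP h4
    · have h6 : a * y' = u ^ N * (s0 * z) ^ t := by
        rw [hN', hy']
        have h7 : (s0 * z) ^ t = (s0 * z) ^ t' * (s0 * z) := by
          rw [← pow_succ, ← ht']
        rw [h7]
        linear_combination (-(u ^ k * z * u * u ^ N' * (s0 * z) ^ t')) * hb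
      rw [mul_add, h6, ha']
      ring

lemma atom_val (h : SU O r t) (hpic : Nonempty (ClassGroup ↥O ≃* ClassGroup R))
    {P : Ideal R} (hP : Prime P) (hPf : O.conductor ≤ P)
    (hq : (Ideal.comap (Subring.subtype O) P).IsPrime) (a : O) (ha : IsLocalAtom O P hq a) :
    1 ≤ idealVal P (a : R) ∧ okv P (idealVal P (a : R)) := by
  have hPp := Ideal.isPrime_of_prime hP
  have ha0 : (a : R) ≠ 0 := by
    intro h0
    have h1 : a = 0 := Subtype.ext h0
    unfold IsLocalAtom at ha
    rw [h1, map_zero] at ha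
    exact ha.ne_zero rfl
  have hpos : 1 ≤ idealVal P (a : R) := by
    rw [Nat.one_le_iff_ne_zero, ne_eq, iv_zero hP ha0, ← loc_unit O P hq]
    exact ha.not_isUnit
  refine ⟨hpos, ?_⟩
  obtain ⟨a', ha'O, ha'0, ha'f, s, hs, c, hc, hsP, hcP, e1⟩ := h.modify hP hPf a.2 ha0
  obtain ⟨l, hl, x, hx, y, hy, hx0, hy0, hxf, hyf, e2⟩ := h.key hpic hP hPf ha'O ha'0 ha'f
  lift l to List O using (fun w hw => (hl w hw).1)
  have hvx : idealVal P x = 0 := iv_of_fs O hPf (m := 0) (by rw [hxf]; rfl)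
  have hvy : idealVal P y = 0 := iv_of_fs O hPf (m := 0) (by rw [hyf]; rfl)
  have hxP := (iv_zero hP hx0).mp hvx
  have hyP := (iv_zero hP hy0).mp hvy
  have hcx : c * x ∉ P := fun h2 => (hPp.mem_or_mem h2).elim hcP hxP
  have hsy : s * y ∉ P := fun h2 => (hPp.mem_or_mem h2).elim hsP hyP
  have hcoe : ((l.prod : O) : R) = (l.map (fun w : O => (w : R))).prod :=
    map_list_prod O.subtype l
  have e3 : (a : R) * (c * x) = (l.prod : O) * (s * y) := by
    rw [hcoe]
    linear_combination x * e1 + s * e2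
  have e4 : a * ⟨c * x, O.mul_mem hc hx⟩ = l.prod * ⟨s * y, O.mul_mem hs hy⟩ := Subtype.ext e3
  have hat := atom_transfer O hq hcx hsy e4 ha
  obtain ⟨w, hw, hwv⟩ := atom_list O hP hq l hat
  have hcx0 : c * x ≠ 0 := fun h0 => hcx (by rw [h0]; exact P.zero_mem)
  have hsy0 : s * y ≠ 0 := fun h0 => hsy (by rw [h0]; exact P.zero_mem)
  have hl0 : ((l.prod : O) : R) ≠ 0 := left_ne_zero_of_mul (e3 ▸ mul_ne_zero ha0 hcx0)
  have hv := congrArg (idealVal P) e3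
  rw [iv_mul P ha0 hcx0, iv_mul P hl0 hsy0, (iv_zero hP hcx0).mpr hcx,
    (iv_zero hP hsy0).mpr hsy, add_zero, add_zero, hwv] at hv
  obtain ⟨-, -, j, hj, hjf⟩ := hl w (List.mem_map_of_mem hw)
  rw [hv, iv_of_fs O hPf hjf]
  exact hj

end SU
end PartK

theorem valuations_of_local_atoms
    {R : Type*} [CommRing R] [IsDomain R] [IsDedekindDomain R]
    (O : Subring R) (hne : O ≠ ⊤) (hfg : Module.Finite ↥O R)
    (hfrac : ∀ r : R, ∃ a b : ↥O, (b : R) ≠ 0 ∧ (b : R) * r = (a : R))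
    (htor : ∀ c : ClassGroup R, ∃ n : ℕ, 0 < n ∧ c ^ n = 1)
    (hfin : Finite (R ⧸ O.conductor))
    (hcls : ∀ c : ClassGroup R, ∃ (P : Ideal R) (hP : P ∈ (Ideal R)⁰),
      P.IsPrime ∧ ¬ O.conductor ≤ P ∧ ClassGroup.mk0 ⟨P, hP⟩ = c)
    (H : Submonoid (FractionRing R)) (hH : IsTKOvermonoid O H)
    (hpic : Nonempty (ClassGroup ↥O ≃* ClassGroup R))
    (P : Ideal R) (hP : P ∈ (Ideal R)⁰) (hPp : P.IsPrime)
    (hPf : O.conductor ≤ P)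
    (hq : (Ideal.comap (Subring.subtype O) P).IsPrime) :
    (orderOf (ClassGroup.mk0 ⟨P, hP⟩) = 2 →
      {m : ℕ | ∃ a : ↥O, IsLocalAtom O P hq a ∧ idealVal P (a : R) = m} ⊆ {1, 2}) ∧
    (orderOf (ClassGroup.mk0 ⟨P, hP⟩) ≠ 2 →
      {m : ℕ | ∃ a : ↥O, IsLocalAtom O P hq a ∧ idealVal P (a : R) = m} = {1}) ∧
    (∀ r : R, ∃ ε : Rˣ, (ε : R) * r ∈ O) := by
  obtain ⟨t, tpos, idemt⟩ := exists_unif_pow O.conductor hfin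
  obtain ⟨c, hc, hc0⟩ := conductor_ne_zero O hfg hfrac
  have f0 : O.conductor ≠ 0 := by
    intro h0
    rw [h0] at hc
    exact hc0 hc
  have hTR := TR_of_H O hfg hfrac H hH
  have hSU : SU O (fun x y => AssocIn H (algebraMap R (FractionRing R) x)
      (algebraMap R (FractionRing R) y)) t :=
    { toTR := hTR
      f0 := f0
      tpos := tpos
      tor := htor
      idemt := idemt
      idemO := by
        intro e he
        refine idem_mem O hfg e he ?_
        intro P1 P2 h1 h2 hf1 hf2 hcm he1 he2
        have heq := spec_inj hTR hfg htor hfin f0 P1 P2 h1 h2 hf1 hf2 hcm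
        subst heq
        apply h1.ne_top
        rw [Ideal.eq_top_iff_one]
        have := P1.add_mem he1 he2
        simpa using this
      cls := by
        intro c
        obtain ⟨Q, hQ, hQp, hQf, hQc⟩ := hcls c
        have hQ' : Prime Q := Ideal.prime_of_isPrime (nonZeroDivisors.ne_zero hQ) hQp
        exact ⟨Q, hQ', coprime_of_prime hQ' hQf, by rw [clG_eq hQ]; exact hQc⟩ }
  have hP' : Prime P := Ideal.prime_of_isPrime (nonZeroDivisors.ne_zero hP) hPp
  refine ⟨?_, ?_, hSU.third hpic⟩
  · rintro - m ⟨a, ha, rfl⟩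
    obtain ⟨h1, h2⟩ := hSU.atom_val hpic hP' hPf hq a ha
    rcases h2 with h2 | ⟨-, -, h2⟩
    · left; exact h2
    · have : idealVal P (a : R) = 1 ∨ idealVal P (a : R) = 2 := by omega
      simpa using this
  · intro hord
    apply Set.Subset.antisymm
    · rintro m ⟨a, ha, rfl⟩
      obtain ⟨h1, h2⟩ := hSU.atom_val hpic hP' hPf hq a ha
      rcases h2 with h2 | ⟨hn, hs, h2⟩
      · exact h2
      · exfalso
        rw [clG_eq hP] at hn hs
        exact hord (orderOf_eq_prime hs hn)
    · rintro m hm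
      rw [Set.mem_singleton_iff] at hm
      subst hm
      obtain ⟨w, hw, hw0, hfw⟩ := hSU.exists_one hpic hP' hPf
      have hv : idealVal P w = 1 := iv_of_fs O hPf (m := 1) (by rw [hfw]; simp)
      exact ⟨⟨w, hw⟩, atom_of_one O hP' hq ⟨w, hw⟩ hw0 hv, hv⟩
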